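/- arXiv:1801.00521 — 5 statements merged into one kernel-verified Lean document; each statement's English description precedes it below -/
import Mathlib

section
/- Fix a > 0 and an integer n ≥ 1, and let σ_m(a) := a · d/da log D_m(a) for m = n−1, n, n+1 (with D_0 := 1, so σ_0 := 0). Then the following second order difference equation holds at the point a: [ (σ_{n−1} − σ_n)(σ_n − σ_{n+1} − 2a²)( (σ_{n−1} − σ_n − 2a²)(σ_n − σ_{n+1}) + 4n a² ) − 8a⁴( σ_n + n(σ_n − σ_{n+1}) ) ]² = (σ_{n−1} − σ_n)(σ_n − σ_{n+1})(σ_{n−1} − σ_n − 2a²)²(σ_n − σ_{n+1} − 2a²)²( (σ_{n−1} − σ_n)(σ_n − σ_{n+1}) + 8n a² ). -/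
/-! The proof uses the monic orthogonal polynomials `P_n` of the even functional
`L_a(p) = ∫_{|x| ≥ a} p(x) e^{-x²} dx`, with `h_n = L_a(P_n²)`, so that `D_n = h_0 ⋯ h_{n-1}`
(`gaussHankel_eq_prod`).

Since `h_n(a)` is the minimum of `L_a(q²)` over monic `q` of degree `n`, it may be differentiated
with the minimiser frozen: `h_n'(a) = -2 e^{-a²} P_n(a)²` (`hasDerivAt_orthNorm`). Therefore
`σ_n = -2a e^{-a²} ∑_{j<n} P_j(a)² / h_j`, and the quantities `A = σ_{n-1} - σ_n` and
`B = σ_n - σ_{n+1}` are `2a e^{-a²} P_{n-1}(a)² / h_{n-1}` and `2a e^{-a²} P_n(a)² / h_n`.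

Put `r = 2 e^{-a²} P_n(a) P_{n-1}(a) / h_{n-1}`. Integrating `(P_n P_{n-1} e^{-x²})'` gives
`2 h_n / h_{n-1} = n + r` (`two_mul_orthNorm_succ`), hence `2a² r² = (n + r) A B`. With the
three-term recurrence, induction on `n` gives the closed form
`σ_n = r² + 2a² r - (n + r)(A + B)` (`sum_eval_sq_div_orthNorm`). These two relations turn the
bracket on the left of the difference equation into `(A - 2a²)(B - 2a²)(AB - 4a² r)`, while the
first of them says `(AB - 4a² r)² = AB (AB + 8n a²)`; squaring eliminates `r`. -/

open MeasureTheory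

/-- The `m`-th moment of the Gaussian weight `e^{-x^2}` on `ℝ` with the
interval `(-a, a)` excised. -/
noncomputable def gaussMoment (a : ℝ) (m : ℕ) : ℝ :=
  ∫ x in {x : ℝ | a ≤ |x|}, x ^ m * Real.exp (-x ^ 2)

/-- The `n × n` Hankel determinant generated by the gapped Gaussian weight. -/
noncomputable def gaussHankel (n : ℕ) (a : ℝ) : ℝ :=
  Matrix.det (Matrix.of fun i j : Fin n => gaussMoment a ((i : ℕ) + (j : ℕ)))

open Polynomial

/-! ### Orthogonal polynomials of an even positive functional -/

/-- The monic orthogonal polynomials of an even linear functional `L`, given by the three-term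
recurrence `P_{n+2} = X P_{n+1} - β_{n+1} P_n`, `β_{n+1} = L(P_{n+1}²) / L(P_n²)`. -/
noncomputable def orthPoly (L : ℝ[X] →ₗ[ℝ] ℝ) : ℕ → ℝ[X]
  | 0 => 1
  | 1 => X
  | n + 2 => X * orthPoly L (n + 1) -
      C (L (orthPoly L (n + 1) * orthPoly L (n + 1)) / L (orthPoly L n * orthPoly L n)) *
        orthPoly L n

/-- The squared norm `h_n = L(P_n²)`. -/
noncomputable def orthNorm (L : ℝ[X] →ₗ[ℝ] ℝ) (n : ℕ) : ℝ := L (orthPoly L n * orthPoly L n)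

lemma orthPoly_add_two (L : ℝ[X] →ₗ[ℝ] ℝ) (n : ℕ) :
    orthPoly L (n + 2) = X * orthPoly L (n + 1) -
      C (orthNorm L (n + 1) / orthNorm L n) * orthPoly L n := by
  rw [orthPoly]; rfl

lemma orthPoly_monic_natDegree (L : ℝ[X] →ₗ[ℝ] ℝ) (n : ℕ) :
    (orthPoly L n).Monic ∧ (orthPoly L n).natDegree = n := by
  induction n using Nat.strong_induction_on with
  | _ n ih =>
    match n, ih with
    | 0, _ => simp [orthPoly]
    | 1, _ => simp [orthPoly, monic_X]
    | k + 2, ih =>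
      obtain ⟨m1, d1⟩ := ih (k + 1) (by omega)
      obtain ⟨m0, d0⟩ := ih k (by omega)
      have mX : (X * orthPoly L (k + 1)).Monic := monic_X.mul m1
      have dX : (X * orthPoly L (k + 1)).natDegree = k + 2 := by
        rw [monic_X.natDegree_mul m1, natDegree_X, d1]; omega
      have hlt : (C (orthNorm L (k + 1) / orthNorm L k) * orthPoly L k).natDegree <
          (X * orthPoly L (k + 1)).natDegree := by
        rw [dX]
        refine lt_of_le_of_lt (natDegree_C_mul_le _ _) ?_
        omega
      rw [orthPoly_add_two]
      exact ⟨mX.sub_of_left (degree_lt_degree hlt),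
        by rw [natDegree_sub_eq_left_of_natDegree_lt hlt, dX]⟩

lemma orthPoly_comp_neg (L : ℝ[X] →ₗ[ℝ] ℝ) (n : ℕ) :
    (orthPoly L n).comp (-X) = (-1) ^ n * orthPoly L n := by
  induction n using Nat.strong_induction_on with
  | _ n ih =>
    match n, ih with
    | 0, _ => simp [orthPoly]
    | 1, _ => simp [orthPoly]
    | k + 2, ih =>
      have h1 := ih (k + 1) (by omega)
      have h0 := ih k (by omega)
      rw [orthPoly_add_two, sub_comp, mul_comp, mul_comp, h1, h0, X_comp, C_comp]
      ring

lemma orthPoly_eval_neg (L : ℝ[X] →ₗ[ℝ] ℝ) (n : ℕ) (x : ℝ) :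
    (orthPoly L n).eval (-x) = (-1) ^ n * (orthPoly L n).eval x := by
  have h := congrArg (eval x) (orthPoly_comp_neg L n)
  simpa [eval_comp] using h

/-- Consecutive orthogonal polynomials have opposite parity, so they are orthogonal. -/
lemma orthPoly_succ_mul_self {L : ℝ[X] →ₗ[ℝ] ℝ} (heven : ∀ p : ℝ[X], L (p.comp (-X)) = L p)
    (n : ℕ) : L (orthPoly L (n + 1) * orthPoly L n) = 0 := by
  have h := heven (orthPoly L (n + 1) * orthPoly L n)
  have e : (orthPoly L (n + 1) * orthPoly L n).comp (-X) =
      -(orthPoly L (n + 1) * orthPoly L n) := by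
    rw [mul_comp, orthPoly_comp_neg, orthPoly_comp_neg]
    have : ((-1 : ℝ[X]) ^ n) * (-1) ^ n = 1 := by rw [← mul_pow]; simp
    linear_combination (-(orthPoly L (n + 1) * orthPoly L n)) * this
  rw [e, map_neg] at h
  linarith

lemma map_C_mul (L : ℝ[X] →ₗ[ℝ] ℝ) (c : ℝ) (p : ℝ[X]) : L (C c * p) = c * L p := by
  rw [← smul_eq_C_mul, map_smul, smul_eq_mul]

lemma orthNorm_pos {L : ℝ[X] →ₗ[ℝ] ℝ} (hpos : ∀ p : ℝ[X], p ≠ 0 → 0 < L (p * p)) (n : ℕ) :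
    0 < orthNorm L n :=
  hpos _ (orthPoly_monic_natDegree L n).1.ne_zero

/-- The functional applied to the recurrence for `P_{n+2}`, with `X` moved onto the second
factor. -/
lemma map_orthPoly_add_two_mul (L : ℝ[X] →ₗ[ℝ] ℝ) (n : ℕ) (q : ℝ[X]) :
    L (orthPoly L (n + 2) * q) = L (orthPoly L (n + 1) * (X * q)) -
      orthNorm L (n + 1) / orthNorm L n * L (orthPoly L n * q) := by
  rw [orthPoly_add_two, ← map_C_mul, ← map_sub]
  congr 1
  ring

lemma X_mul_orthPoly_succ (L : ℝ[X] →ₗ[ℝ] ℝ) (n : ℕ) :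
    X * orthPoly L (n + 1) = orthPoly L (n + 2) +
      C (orthNorm L (n + 1) / orthNorm L n) * orthPoly L n := by
  rw [orthPoly_add_two]; ring

lemma X_mul_orthPoly_zero (L : ℝ[X] →ₗ[ℝ] ℝ) : X * orthPoly L 0 = orthPoly L 1 := by
  simp [orthPoly]

lemma orthPoly_orthogonal {L : ℝ[X] →ₗ[ℝ] ℝ} (hpos : ∀ p : ℝ[X], p ≠ 0 → 0 < L (p * p))
    (heven : ∀ p : ℝ[X], L (p.comp (-X)) = L p) (n : ℕ) :
    ∀ m < n, L (orthPoly L n * orthPoly L m) = 0 := by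
  induction n using Nat.strong_induction_on with
  | _ n ih =>
    match n, ih with
    | 0, _ => intro m hm; omega
    | 1, _ =>
      intro m hm
      obtain rfl : m = 0 := by omega
      exact orthPoly_succ_mul_self heven 0
    | k + 2, ih =>
      intro m hm
      rcases (by omega : m = k + 1 ∨ m = k ∨ m < k) with rfl | rfl | hlt
      · exact orthPoly_succ_mul_self heven _
        -- the coefficient `β_{m+1}` is chosen to make the next product vanish
      · have hb : orthNorm L (m + 1) / orthNorm L m * L (orthPoly L m * orthPoly L m) =
            orthNorm L (m + 1) := div_mul_cancel₀ _ (orthNorm_pos hpos m).ne'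
        rw [map_orthPoly_add_two_mul, hb]
        cases m with
        | zero => rw [X_mul_orthPoly_zero]; exact sub_self _
        | succ j =>
          rw [X_mul_orthPoly_succ, mul_add, map_add, mul_left_comm, map_C_mul,
            ih (j + 2) (by omega) j (by omega), mul_zero, add_zero]
          exact sub_self _
      · rw [map_orthPoly_add_two_mul, ih k (by omega) m hlt]
        cases m with
        | zero => rw [X_mul_orthPoly_zero, ih (k + 1) (by omega) 1 (by omega)]; simp
        | succ j =>
          rw [X_mul_orthPoly_succ, mul_add, map_add, mul_left_comm, map_C_mul,
            ih (k + 1) (by omega) j (by omega), ih (k + 1) (by omega) (j + 2) (by omega)]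
          simp

lemma map_orthPoly_mul_X_pow {L : ℝ[X] →ₗ[ℝ] ℝ} (hpos : ∀ p : ℝ[X], p ≠ 0 → 0 < L (p * p))
    (heven : ∀ p : ℝ[X], L (p.comp (-X)) = L p) (k : ℕ) :
    ∀ n, k < n → L (orthPoly L n * X ^ k) = 0 := by
  induction k with
  | zero =>
    intro n hn
    simpa [orthPoly] using orthPoly_orthogonal hpos heven n 0 hn
  | succ k ih =>
    intro n hn
    obtain ⟨j, rfl⟩ : ∃ j, n = j + 1 := ⟨n - 1, by omega⟩
    have e : orthPoly L (j + 1) * X ^ (k + 1) = (X * orthPoly L (j + 1)) * X ^ k := by ring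
    rw [e, X_mul_orthPoly_succ, add_mul, map_add, mul_assoc, map_C_mul, ih _ (by omega),
      ih _ (by omega)]
    simp

lemma map_orthPoly_mul_of_degree_lt {L : ℝ[X] →ₗ[ℝ] ℝ}
    (hpos : ∀ p : ℝ[X], p ≠ 0 → 0 < L (p * p))
    (heven : ∀ p : ℝ[X], L (p.comp (-X)) = L p) {n : ℕ} {q : ℝ[X]} (hq : q.degree < n) :
    L (orthPoly L n * q) = 0 := by
  by_cases h0 : q = 0
  · simp [h0]
  rw [as_sum_range_C_mul_X_pow' q ((natDegree_lt_iff_degree_lt h0).2 hq), Finset.mul_sum, map_sum]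
  refine Finset.sum_eq_zero fun i hi => ?_
  rw [mul_left_comm, map_C_mul, map_orthPoly_mul_X_pow hpos heven i n (Finset.mem_range.1 hi),
    mul_zero]

/-- Extremal characterisation of `h_n`: it is the least value of `L(q²)` over monic `q` of
degree `n`. -/
lemma orthNorm_le {L : ℝ[X] →ₗ[ℝ] ℝ} (hpos : ∀ p : ℝ[X], p ≠ 0 → 0 < L (p * p))
    (heven : ∀ p : ℝ[X], L (p.comp (-X)) = L p) {n : ℕ} {q : ℝ[X]} (hq : q.Monic)
    (hd : q.natDegree = n) : orthNorm L n ≤ L (q * q) := by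
  obtain ⟨m, d⟩ := orthPoly_monic_natDegree L n
  have hdeg : (q - orthPoly L n).degree < n := by
    have h := degree_sub_lt_left (p := q) (q := orthPoly L n)
      (by rw [degree_eq_natDegree hq.ne_zero, degree_eq_natDegree m.ne_zero, hd, d]) hq.ne_zero
      (by rw [hq.leadingCoeff, m.leadingCoeff])
    rwa [degree_eq_natDegree hq.ne_zero, hd] at h
  have e : q * q = orthPoly L n * orthPoly L n + (orthPoly L n * (q - orthPoly L n) +
      orthPoly L n * (q - orthPoly L n) + (q - orthPoly L n) * (q - orthPoly L n)) := by ring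
  have hnn : 0 ≤ L ((q - orthPoly L n) * (q - orthPoly L n)) := by
    by_cases h0 : q - orthPoly L n = 0
    · simp [h0]
    · exact (hpos _ h0).le
  rw [e, map_add, map_add, map_add, map_orthPoly_mul_of_degree_lt hpos heven hdeg]
  unfold orthNorm
  linarith

/-- The Hankel determinant is a product of squared norms: the Gram matrix in the basis `P_j` is
diagonal, and the change of basis from monomials is unitriangular. -/
lemma det_hankel_eq_prod {L : ℝ[X] →ₗ[ℝ] ℝ} (hpos : ∀ p : ℝ[X], p ≠ 0 → 0 < L (p * p))
    (heven : ∀ p : ℝ[X], L (p.comp (-X)) = L p) (n : ℕ) :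
    Matrix.det (Matrix.of fun i j : Fin n => L (X ^ ((i : ℕ) + (j : ℕ)))) =
      ∏ j ∈ Finset.range n, orthNorm L j := by
  set M := Matrix.of fun i j : Fin n => L (X ^ ((i : ℕ) + (j : ℕ))) with hM
  set T := Matrix.of fun i j : Fin n => (orthPoly L j).coeff i with hT
  have hdT : T.det = 1 := Matrix.det_matrixOfPolynomials (fun j : Fin n => orthPoly L j)
    (fun j => (orthPoly_monic_natDegree L j).2) (fun j => (orthPoly_monic_natDegree L j).1)
  have hexp : ∀ j : Fin n, orthPoly L j = ∑ k : Fin n, C ((orthPoly L j).coeff k) * X ^ (k : ℕ) := by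
    intro j
    rw [Fin.sum_univ_eq_sum_range (fun k => C ((orthPoly L j).coeff k) * X ^ k) n]
    exact as_sum_range_C_mul_X_pow' _ (by rw [(orthPoly_monic_natDegree L j).2]; exact j.2)
  have hG : T.transpose * M * T = Matrix.diagonal fun j : Fin n => orthNorm L j := by
    ext i j
    have h1 : (T.transpose * M * T) i j = L (orthPoly L i * orthPoly L j) := by
      conv_rhs => rw [hexp i, hexp j, Finset.sum_mul_sum]
      simp only [Matrix.mul_apply, map_sum, Finset.sum_mul, Matrix.transpose_apply]
      rw [Finset.sum_comm]
      refine Finset.sum_congr rfl fun k _ => Finset.sum_congr rfl fun l _ => ?_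
      have e : C ((orthPoly L i).coeff k) * X ^ (k : ℕ) *
          (C ((orthPoly L j).coeff l) * X ^ (l : ℕ)) =
          C ((orthPoly L i).coeff k) * (C ((orthPoly L j).coeff l) * X ^ ((k : ℕ) + l)) := by
        rw [pow_add]; ring
      rw [e, map_C_mul, map_C_mul]
      simp only [hT, hM, Matrix.of_apply]
      ring
    rw [h1]
    rcases lt_trichotomy i j with h | rfl | h
    · rw [Matrix.diagonal_apply_ne _ h.ne, mul_comm]
      exact orthPoly_orthogonal hpos heven _ _ h
    · rw [Matrix.diagonal_apply_eq]; rfl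
    · rw [Matrix.diagonal_apply_ne _ h.ne']
      exact orthPoly_orthogonal hpos heven _ _ h
  have hdet := congrArg Matrix.det hG
  rw [Matrix.det_mul, Matrix.det_mul, Matrix.det_transpose, hdT, Matrix.det_diagonal,
    Fin.prod_univ_eq_prod_range (fun j => orthNorm L j) n] at hdet
  simpa using hdet

lemma map_derivative_orthPoly_mul {L : ℝ[X] →ₗ[ℝ] ℝ}
    (hpos : ∀ p : ℝ[X], p ≠ 0 → 0 < L (p * p))
    (heven : ∀ p : ℝ[X], L (p.comp (-X)) = L p) (n : ℕ) :
    L (derivative (orthPoly L (n + 1)) * orthPoly L n) = (n + 1) * orthNorm L n := by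
  obtain ⟨m1, d1⟩ := orthPoly_monic_natDegree L (n + 1)
  obtain ⟨m0, d0⟩ := orthPoly_monic_natDegree L n
  have hdeg : (derivative (orthPoly L (n + 1)) - C ((n : ℝ) + 1) * orthPoly L n).degree < n := by
    rw [degree_lt_iff_coeff_zero]
    intro m hm
    rw [coeff_sub, coeff_derivative, coeff_C_mul]
    rcases hm.eq_or_lt with rfl | hlt
    · have c1 : (orthPoly L (n + 1)).coeff (n + 1) = 1 := by
        have := m1.coeff_natDegree; rwa [d1] at this
      have c0 : (orthPoly L n).coeff n = 1 := by
        have := m0.coeff_natDegree; rwa [d0] at this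
      rw [c1, c0]; ring
    · rw [coeff_eq_zero_of_natDegree_lt (by omega), coeff_eq_zero_of_natDegree_lt (by omega)]
      ring
  have h := map_orthPoly_mul_of_degree_lt hpos heven hdeg
  have e : derivative (orthPoly L (n + 1)) * orthPoly L n =
      orthPoly L n * (derivative (orthPoly L (n + 1)) - C ((n : ℝ) + 1) * orthPoly L n) +
      C ((n : ℝ) + 1) * (orthPoly L n * orthPoly L n) := by ring
  rw [e, map_add, h, map_C_mul, zero_add]
  rfl

/-- Integrating `(P_{n+1} P_n w)'`: if `L` is integration against `e^{-x²}` off `(-a, a)`, encoded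
by `hibp` with `e = e^{-a²}`, then `2 h_{n+1} = (n+1) h_n + 2 e P_{n+1}(a) P_n(a)`. -/
lemma two_mul_orthNorm_succ {L : ℝ[X] →ₗ[ℝ] ℝ}
    (hpos : ∀ p : ℝ[X], p ≠ 0 → 0 < L (p * p))
    (heven : ∀ p : ℝ[X], L (p.comp (-X)) = L p) {a e : ℝ}
    (hibp : ∀ f : ℝ[X], L (derivative f) = 2 * L (X * f) - e * (f.eval a - f.eval (-a))) (n : ℕ) :
    2 * orthNorm L (n + 1) = (n + 1) * orthNorm L n +
      2 * e * (orthPoly L (n + 1)).eval a * (orthPoly L n).eval a := by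
  have h := hibp (orthPoly L (n + 1) * orthPoly L n)
  obtain ⟨m0, d0⟩ := orthPoly_monic_natDegree L n
  have hd : L (orthPoly L (n + 1) * derivative (orthPoly L n)) = 0 := by
    apply map_orthPoly_mul_of_degree_lt hpos heven
    refine lt_of_le_of_lt (degree_derivative_le) ?_
    rw [degree_eq_natDegree m0.ne_zero, d0]
    exact_mod_cast n.lt_succ_self
  have hX : L (X * (orthPoly L (n + 1) * orthPoly L n)) = orthNorm L (n + 1) := by
    rw [mul_left_comm]
    cases n with
    | zero => rw [X_mul_orthPoly_zero]; rfl
    | succ j =>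
      rw [X_mul_orthPoly_succ, mul_add, map_add, mul_left_comm, map_C_mul,
        orthPoly_orthogonal hpos heven (j + 2) j (by omega), mul_zero, add_zero]
      rfl
  rw [derivative_mul, map_add, hd, map_derivative_orthPoly_mul hpos heven, hX, eval_mul, eval_mul,
    orthPoly_eval_neg, orthPoly_eval_neg] at h
  have hs : ((-1 : ℝ) ^ n) * (-1) ^ n = 1 := by rw [← mul_pow]; simp
  linear_combination (-1 : ℝ) * h + e * (orthPoly L (n + 1)).eval a * (orthPoly L n).eval a * hs

/-- Closed form for the reproducing kernel `∑_{j ≤ n} P_j(a)² / h_j` on the diagonal at the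
endpoint `a`, by induction from the recurrence and the identity for `h_{n+1} / h_n`. -/
lemma sum_eval_sq_div_orthNorm {L : ℝ[X] →ₗ[ℝ] ℝ}
    (hpos : ∀ p : ℝ[X], p ≠ 0 → 0 < L (p * p))
    (heven : ∀ p : ℝ[X], L (p.comp (-X)) = L p) {a e : ℝ} (ha : a ≠ 0)
    (hibp : ∀ f : ℝ[X], L (derivative f) = 2 * L (X * f) - e * (f.eval a - f.eval (-a))) (n : ℕ) :
    a * orthNorm L n ^ 2 * ∑ j ∈ Finset.range (n + 1), (orthPoly L j).eval a ^ 2 / orthNorm L j =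
      2 * a * orthNorm L (n + 1) * (orthPoly L n).eval a ^ 2 +
      2 * a * orthNorm L n * (orthPoly L (n + 1)).eval a *
        ((orthPoly L (n + 1)).eval a - a * (orthPoly L n).eval a) -
      2 * e * (orthPoly L (n + 1)).eval a ^ 2 * (orthPoly L n).eval a ^ 2 := by
  induction n with
  | zero =>
    have h := two_mul_orthNorm_succ hpos heven hibp 0
    have h0 := (orthNorm_pos hpos 0).ne'
    simp only [orthPoly, eval_X, eval_one, CharP.cast_eq_zero] at h ⊢
    simp [orthPoly]
    field_simp
    linear_combination (-1 : ℝ) * h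
  | succ n ih =>
    have h1 := two_mul_orthNorm_succ hpos heven hibp n
    have h2 := two_mul_orthNorm_succ hpos heven hibp (n + 1)
    have p0 := (orthNorm_pos hpos n).ne'
    have p1 := (orthNorm_pos hpos (n + 1)).ne'
    have hrec : (orthPoly L (n + 2)).eval a = a * (orthPoly L (n + 1)).eval a -
        orthNorm L (n + 1) / orthNorm L n * (orthPoly L n).eval a := by
      rw [orthPoly_add_two]; simp
    rw [Finset.sum_range_succ]
    push_cast at h2
    rw [show n + 1 + 1 = n + 2 from rfl] at *
    generalize (orthPoly L (n + 2)).eval a = u at *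
    generalize (orthPoly L (n + 1)).eval a = p at *
    generalize (orthPoly L n).eval a = q at *
    generalize orthNorm L (n + 2) = h'' at *
    generalize orthNorm L (n + 1) = h' at *
    generalize orthNorm L n = h at *
    generalize (∑ j ∈ Finset.range (n + 1), (orthPoly L j).eval a ^ 2 / orthNorm L j) = K at *
    have ih' : K = (2 * a * h' * q ^ 2 + 2 * a * h * p * (p - a * q) -
      2 * e * p ^ 2 * q ^ 2) / (a * h ^ 2) := by
      rw [eq_div_iff (by positivity)]; linear_combination ih
    have h1' : (n : ℝ) = (2 * h' - 2 * e * p * q) / h - 1 := by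
      field_simp; linear_combination (-1 : ℝ) * h1
    have h2' : h'' = ((n + 1 + 1) * h' + 2 * e * u * p) / 2 := by linarith
    rw [h2', h1', hrec, ih']
    field_simp
    ring

/-! ### The gapped Gaussian functional -/

lemma integrable_eval_mul_exp (p : ℝ[X]) :
    Integrable fun x : ℝ => p.eval x * Real.exp (-x ^ 2) := by
  induction p using Polynomial.induction_on' with
  | add p q hp hq =>
    simp only [eval_add, add_mul]
    exact hp.add hq
  | monomial n c =>
    have h := integrable_rpow_mul_exp_neg_mul_sq (b := 1) one_pos (s := (n : ℝ))
      (by have : (0 : ℝ) ≤ n := n.cast_nonneg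
          linarith)
    simpa [Real.rpow_natCast, mul_assoc] using h.const_mul c

/-- The functional `p ↦ ∫_{|x| ≥ a} p(x) e^{-x²} dx` on polynomials. -/
noncomputable def gapL (a : ℝ) : ℝ[X] →ₗ[ℝ] ℝ where
  toFun p := ∫ x in {x : ℝ | a ≤ |x|}, p.eval x * Real.exp (-x ^ 2)
  map_add' p q := by
    simp only [eval_add, add_mul]
    exact integral_add (integrable_eval_mul_exp p).integrableOn
      (integrable_eval_mul_exp q).integrableOn
  map_smul' c p := by
    simp only [eval_smul, smul_eq_mul, mul_assoc, RingHom.id_apply]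
    exact integral_const_mul _ _

lemma gaussMoment_eq_gapL (a : ℝ) (m : ℕ) : gaussMoment a m = gapL a (X ^ m) := by
  simp [gaussMoment, gapL]

lemma continuous_eval_mul_exp (p : ℝ[X]) :
    Continuous fun x : ℝ => p.eval x * Real.exp (-x ^ 2) := by
  have := p.continuous
  fun_prop

lemma gapL_eq {a : ℝ} (ha : 0 < a) (p : ℝ[X]) :
    gapL a p = (∫ x, p.eval x * Real.exp (-x ^ 2)) -
      ∫ x in -a..a, p.eval x * Real.exp (-x ^ 2) := by
  have hs : {x : ℝ | a ≤ |x|} = (Set.Ioo (-a) a)ᶜ := by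
    ext x
    simp only [Set.mem_ofPred_eq, Set.mem_compl_iff, Set.mem_Ioo, ← abs_lt, not_lt]
  change (∫ x in {x : ℝ | a ≤ |x|}, p.eval x * Real.exp (-x ^ 2)) = _
  rw [hs, setIntegral_compl measurableSet_Ioo (integrable_eval_mul_exp p),
    intervalIntegral.integral_of_le (by linarith), integral_Ioc_eq_integral_Ioo]

lemma gapL_even {a : ℝ} (ha : 0 < a) (p : ℝ[X]) : gapL a (p.comp (-X)) = gapL a p := by
  have e : ∀ x : ℝ, (p.comp (-X)).eval x * Real.exp (-x ^ 2) =
      (fun y : ℝ => p.eval y * Real.exp (-y ^ 2)) (-x) := by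
    intro x; simp [eval_comp]
  rw [gapL_eq ha, gapL_eq ha]
  simp only [e]
  rw [integral_neg_eq_self (fun y : ℝ => p.eval y * Real.exp (-y ^ 2)),
    intervalIntegral.integral_comp_neg (fun y : ℝ => p.eval y * Real.exp (-y ^ 2)), neg_neg]

lemma gapL_pos (a : ℝ) (p : ℝ[X]) (hp : p ≠ 0) : 0 < gapL a (p * p) := by
  change 0 < ∫ x in {x : ℝ | a ≤ |x|}, (p * p).eval x * Real.exp (-x ^ 2)
  rw [setIntegral_pos_iff_support_of_nonneg_ae
    (Filter.Eventually.of_forall fun x => by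
      rw [Pi.zero_apply, eval_mul]
      exact mul_nonneg (mul_self_nonneg _) (Real.exp_pos _).le)
    (integrable_eval_mul_exp _).integrableOn]
  -- the integrand vanishes only at the finitely many roots of `p`
  have hfin : (volume : Measure ℝ) {x : ℝ | p.eval x = 0} = 0 := by
    have : {x : ℝ | p.eval x = 0} = (p.rootSet ℝ) := by
      ext x; simp [mem_rootSet, hp]
    rw [this]
    exact (p.rootSet_finite ℝ).measure_zero _
  have hsub : Set.Ici (max a 0) \ {x : ℝ | p.eval x = 0} ⊆
      Function.support (fun x => (p * p).eval x * Real.exp (-x ^ 2)) ∩ {x : ℝ | a ≤ |x|} := by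
    rintro x ⟨hx, hx0⟩
    simp only [Set.mem_Ici, max_le_iff, Set.mem_ofPred_eq] at hx hx0
    refine ⟨?_, hx.1.trans (le_abs_self x)⟩
    simp [hx0, Real.exp_ne_zero]
  refine lt_of_lt_of_le ?_ (measure_mono hsub)
  rw [measure_sdiff_null hfin]
  simp

/-- Integration by parts for the gapped Gaussian weight. -/
lemma gapL_derivative {a : ℝ} (ha : 0 < a) (f : ℝ[X]) :
    gapL a (derivative f) = 2 * gapL a (X * f) -
      Real.exp (-a ^ 2) * (f.eval a - f.eval (-a)) := by
  set g : ℝ[X] := derivative f - C 2 * (X * f) with hg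
  have hder : ∀ x : ℝ, HasDerivAt (fun x : ℝ => f.eval x * Real.exp (-x ^ 2))
      (g.eval x * Real.exp (-x ^ 2)) x := by
    intro x
    have h2 : HasDerivAt (fun x : ℝ => Real.exp (-x ^ 2)) (Real.exp (-x ^ 2) * (-(2 * x))) x := by
      have := ((hasDerivAt_id x).pow 2).neg.exp
      simpa using this
    refine ((f.hasDerivAt x).mul h2).congr_deriv ?_
    simp only [hg, eval_sub, eval_mul, eval_C, eval_X]
    ring
  have hfull : ∫ x, g.eval x * Real.exp (-x ^ 2) = 0 :=
    integral_eq_zero_of_hasDerivAt_of_integrable hder (integrable_eval_mul_exp g)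
      (integrable_eval_mul_exp f)
  have hint : ∫ x in -a..a, g.eval x * Real.exp (-x ^ 2) =
      f.eval a * Real.exp (-a ^ 2) - f.eval (-a) * Real.exp (-(-a) ^ 2) :=
    intervalIntegral.integral_eq_sub_of_hasDerivAt (fun x _ => hder x)
      ((continuous_eval_mul_exp g).intervalIntegrable _ _)
  have h := gapL_eq ha g
  rw [hfull, hint, hg, map_sub, map_C_mul, neg_sq] at h
  linear_combination h

lemma hasDerivAt_gapL {a : ℝ} (ha : 0 < a) (p : ℝ[X]) :
    HasDerivAt (fun t => gapL t p) (-(p.eval a + p.eval (-a)) * Real.exp (-a ^ 2)) a := by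
  set g : ℝ → ℝ := fun x => p.eval x * Real.exp (-x ^ 2) with hg
  have hc : Continuous g := continuous_eval_mul_exp p
  have hF : ∀ b : ℝ, HasDerivAt (fun u => ∫ x in (0 : ℝ)..u, g x) (g b) b := fun b =>
    intervalIntegral.integral_hasDerivAt_right (hc.intervalIntegrable _ _)
      (hc.stronglyMeasurableAtFilter _ _) hc.continuousAt
  have hloc : (fun t => gapL t p) =ᶠ[nhds a] fun t =>
      (∫ x, g x) - ((∫ x in (0 : ℝ)..t, g x) - ∫ x in (0 : ℝ)..(-t), g x) := by
    filter_upwards [lt_mem_nhds ha] with t ht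
    rw [gapL_eq ht, intervalIntegral.integral_interval_sub_left (hc.intervalIntegrable _ _)
      (hc.intervalIntegrable _ _)]
  refine HasDerivAt.congr_of_eventuallyEq ?_ hloc
  have hneg : HasDerivAt (fun t => ∫ x in (0 : ℝ)..(-t), g x) (g (-a) * (-1)) a :=
    (hF (-a)).comp a (hasDerivAt_neg a)
  have h := ((hF a).sub hneg).const_sub (∫ x, g x)
  have e : -(p.eval a + p.eval (-a)) * Real.exp (-a ^ 2) = -(g a - g (-a) * (-1)) := by
    simp only [hg, neg_sq]; ring
  rw [e]
  exact h

/-! ### Logarithmic derivative of the Hankel determinant -/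

lemma gaussHankel_eq_prod {a : ℝ} (ha : 0 < a) (n : ℕ) :
    gaussHankel n a = ∏ j ∈ Finset.range n, orthNorm (gapL a) j := by
  unfold gaussHankel
  simp only [gaussMoment_eq_gapL]
  exact det_hankel_eq_prod (gapL_pos a) (gapL_even ha) n

lemma differentiableAt_gaussHankel {a : ℝ} (ha : 0 < a) (n : ℕ) :
    DifferentiableAt ℝ (gaussHankel n) a := by
  have e : gaussHankel n = fun t => ∑ s : Equiv.Perm (Fin n), (Equiv.Perm.sign s : ℤ) •
      ∏ i, gapL t (X ^ ((s i : ℕ) + (i : ℕ))) := by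
    funext t
    simp only [gaussHankel, Matrix.det_apply, Matrix.of_apply, gaussMoment_eq_gapL]
    rfl
  rw [e]
  refine DifferentiableAt.fun_sum fun s _ => DifferentiableAt.fun_const_smul ?_ _
  exact DifferentiableAt.fun_finsetProd fun i _ => (hasDerivAt_gapL ha _).differentiableAt

/-- `h_n'(a) = -2 e^{-a²} P_n(a)²`. By extremality `h_n(t) ≤ L_t(P_n²)` with `P_n` frozen at
parameter `a`, with equality at `t = a`; hence the two sides have the same derivative there, and
no derivative of the coefficients of `P_n` in the parameter is needed. -/
lemma hasDerivAt_orthNorm {a : ℝ} (ha : 0 < a) (n : ℕ) :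
    HasDerivAt (fun t => orthNorm (gapL t) n)
      (-2 * Real.exp (-a ^ 2) * (orthPoly (gapL a) n).eval a ^ 2) a := by
  have hpos : ∀ᶠ t in nhds a, 0 < t := lt_mem_nhds ha
  have hquot : (fun t => orthNorm (gapL t) n) =ᶠ[nhds a]
      fun t => gaussHankel (n + 1) t / gaussHankel n t := by
    filter_upwards [hpos] with t ht
    rw [gaussHankel_eq_prod ht, gaussHankel_eq_prod ht, Finset.prod_range_succ,
      mul_div_cancel_left₀]
    exact (Finset.prod_pos fun j _ => orthNorm_pos (gapL_pos t) j).ne'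
  have hne : gaussHankel n a ≠ 0 := by
    rw [gaussHankel_eq_prod ha]
    exact (Finset.prod_pos fun j _ => orthNorm_pos (gapL_pos a) j).ne'
  have hdiff : DifferentiableAt ℝ (fun t => orthNorm (gapL t) n) a :=
    ((differentiableAt_gaussHankel ha (n + 1)).div (differentiableAt_gaussHankel ha n)
      hne).congr_of_eventuallyEq hquot
  set p := orthPoly (gapL a) n with hp
  have hg := hasDerivAt_gapL ha (p * p)
  have hmax : IsLocalMax (fun t => orthNorm (gapL t) n - gapL t (p * p)) a := by
    filter_upwards [hpos] with t ht
    have h1 := orthNorm_le (gapL_pos t) (gapL_even ht) (orthPoly_monic_natDegree (gapL a) n).1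
      (orthPoly_monic_natDegree (gapL a) n).2
    have h2 : orthNorm (gapL a) n - gapL a (p * p) = 0 := sub_self _
    rw [h2]
    exact sub_nonpos.2 h1
  have hz := hmax.hasDerivAt_eq_zero (hdiff.hasDerivAt.sub hg)
  have hd := hdiff.hasDerivAt
  rw [sub_eq_zero.1 hz] at hd
  refine hd.congr_deriv ?_
  rw [eval_mul, eval_mul, hp, orthPoly_eval_neg]
  have hs : ((-1 : ℝ) ^ n) * (-1) ^ n = 1 := by rw [← mul_pow]; simp
  linear_combination (-Real.exp (-a ^ 2)) * (orthPoly (gapL a) n).eval a ^ 2 * hs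

lemma deriv_log_gaussHankel {a : ℝ} (ha : 0 < a) (n : ℕ) :
    deriv (fun t => Real.log (gaussHankel n t)) a = -2 * Real.exp (-a ^ 2) *
      ∑ j ∈ Finset.range n, (orthPoly (gapL a) j).eval a ^ 2 / orthNorm (gapL a) j := by
  have hloc : (fun t => Real.log (gaussHankel n t)) =ᶠ[nhds a]
      fun t => ∑ j ∈ Finset.range n, Real.log (orthNorm (gapL t) j) := by
    filter_upwards [lt_mem_nhds ha] with t ht
    rw [gaussHankel_eq_prod ht, Real.log_prod]
    exact fun j _ => (orthNorm_pos (gapL_pos t) j).ne'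
  rw [hloc.deriv_eq, Finset.mul_sum]
  refine HasDerivAt.deriv ?_
  refine (HasDerivAt.fun_sum (u := Finset.range n) fun j _ =>
    (hasDerivAt_orthNorm ha j).log (orthNorm_pos (gapL_pos a) j).ne').congr_deriv ?_
  exact Finset.sum_congr rfl fun j _ => by ring

/-! ### The difference equation -/

theorem gue_sigma_difference_equation (a : ℝ) (ha : 0 < a) (n : ℕ) (hn : 1 ≤ n)
    (σ : ℕ → ℝ)
    (hσ : ∀ m, σ m = a * deriv (fun x => Real.log (gaussHankel m x)) a) :
    ((σ (n - 1) - σ n) * (σ n - σ (n + 1) - 2 * a ^ 2) *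
        ((σ (n - 1) - σ n - 2 * a ^ 2) * (σ n - σ (n + 1)) + 4 * (n : ℝ) * a ^ 2) -
      8 * a ^ 4 * (σ n + (n : ℝ) * (σ n - σ (n + 1)))) ^ 2 =
    (σ (n - 1) - σ n) * (σ n - σ (n + 1)) * (σ (n - 1) - σ n - 2 * a ^ 2) ^ 2 *
      (σ n - σ (n + 1) - 2 * a ^ 2) ^ 2 *
      ((σ (n - 1) - σ n) * (σ n - σ (n + 1)) + 8 * (n : ℝ) * a ^ 2) := by
  obtain ⟨k, rfl⟩ : ∃ k, n = k + 1 := ⟨n - 1, by omega⟩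
  rw [Nat.add_sub_cancel]
  have hpos := gapL_pos a
  have heven := gapL_even ha
  have hibp := gapL_derivative ha
  have h1 := two_mul_orthNorm_succ hpos heven hibp k
  have hK := sum_eval_sq_div_orthNorm hpos heven ha.ne' hibp k
  have q0 := (orthNorm_pos hpos k).ne'
  have q1 := (orthNorm_pos hpos (k + 1)).ne'
  have hs0 := hσ k
  have hs1 := hσ (k + 1)
  have hs2 := hσ (k + 1 + 1)
  rw [deriv_log_gaussHankel ha] at hs0 hs1 hs2
  have hrec : ∀ m, ∑ j ∈ Finset.range (m + 1),
      (orthPoly (gapL a) j).eval a ^ 2 / orthNorm (gapL a) j =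
      ∑ j ∈ Finset.range m, (orthPoly (gapL a) j).eval a ^ 2 / orthNorm (gapL a) j +
      (orthPoly (gapL a) m).eval a ^ 2 / orthNorm (gapL a) m := fun m => Finset.sum_range_succ _ _
  have hA : σ k - σ (k + 1) = 2 * a * Real.exp (-a ^ 2) *
      ((orthPoly (gapL a) k).eval a ^ 2 / orthNorm (gapL a) k) := by
    rw [hs0, hs1, hrec k]; ring
  have hB : σ (k + 1) - σ (k + 1 + 1) = 2 * a * Real.exp (-a ^ 2) *
      ((orthPoly (gapL a) (k + 1)).eval a ^ 2 / orthNorm (gapL a) (k + 1)) := by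
    rw [hs1, hs2, hrec (k + 1)]; ring
  have ha0 := ha.ne'
  push_cast
  generalize σ k - σ (k + 1) = A at *
  generalize σ (k + 1) - σ (k + 1 + 1) = B at *
  generalize σ (k + 1) = s at *
  generalize (∑ j ∈ Finset.range (k + 1),
    (orthPoly (gapL a) j).eval a ^ 2 / orthNorm (gapL a) j) = K at *
  generalize (orthPoly (gapL a) (k + 1)).eval a = p at *
  generalize (orthPoly (gapL a) k).eval a = q at *
  generalize Real.exp (-a ^ 2) = e at *
  generalize orthNorm (gapL a) (k + 1) = h' at *
  generalize orthNorm (gapL a) k = h at *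
  generalize ((k : ℝ) + 1) = N at *
  obtain ⟨r, hr⟩ : ∃ r, r = 2 * e * p * q / h := ⟨_, rfl⟩
  have hβ : N + r = 2 * h' / h := by
    rw [hr]; field_simp; linear_combination (-1 : ℝ) * h1
  have hquad : 2 * a ^ 2 * r ^ 2 = (N + r) * (A * B) := by
    rw [hβ, hA, hB, hr]; field_simp
  have hsig : s = r ^ 2 + 2 * a ^ 2 * r - (N + r) * (A + B) := by
    have hK2 : K = (2 * a * h' * q ^ 2 + 2 * a * h * p * (p - a * q) -
        2 * e * p ^ 2 * q ^ 2) / (a * h ^ 2) := by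
      rw [eq_div_iff (by positivity)]; linear_combination hK
    rw [hβ, hs1, hK2, hA, hB, hr]; field_simp; ring
  have hbr : A * (B - 2 * a ^ 2) * ((A - 2 * a ^ 2) * B + 4 * N * a ^ 2) -
      8 * a ^ 4 * (s + N * B) = (A - 2 * a ^ 2) * (B - 2 * a ^ 2) * (A * B - 4 * a ^ 2 * r) := by
    linear_combination (-8 * a ^ 4) * hsig - 4 * a ^ 2 * hquad
  rw [hbr]
  linear_combination (8 * a ^ 2 * (A - 2 * a ^ 2) ^ 2 * (B - 2 * a ^ 2) ^ 2) * hquad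
end

section
/- Fix an integer n ≥ 1 and let σ_n(a) := a · d/da log D_n(a) for a > 0. Then σ_n is twice differentiable on (0,∞) and satisfies, for every a > 0, the second order fourth degree differential equation 16[ a²σ_n'' + 4(σ_n + 2n a²)(a σ_n' − σ_n − a⁴) − 4a⁴ ] · [ a⁴(σ_n'')² − 4a² σ_n''(a σ_n' − σ_n) + 4(a σ_n' − σ_n − a⁴)(a σ_n' − 2σ_n)² ] = [ a²(σ_n'')² + 4( (σ_n')² + 8n(a σ_n' − σ_n) − 4a² )(a σ_n' − σ_n − a⁴) − 16a⁶ ]², where primes denote derivatives with respect to a. -/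
/-!
For `a > 0` let `P_k` be the monic orthogonal polynomials of the weight `e^{-x²}` on `|x| ≥ a`,
`h_k` their squared norms, `p_k = P_k(a)` the values at the endpoint and `E = e^{-a²}`. The weight
is even, so `P_{k+2} = x P_{k+1} - (h_{k+1}/h_k) P_k`, and `D_n = h_0 ⋯ h_{n-1}`
(`EvenPos.hankel_det`).

Integration by parts applied to `P_k P_{k+1}` gives `h_{k+1} = E p_{k+1} p_k + (k+1)/2 h_k`
(`EvenPos.norm_succ`). Together with the three-term recurrence at `x = a` and `h_0' = -2E`, this
determines the functions `h_k`, `p_k` of `a`, and an induction in these scalars alone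
(`scalar_derivs`) computes `h_k' = -2E p_k²` and `p_k'`. Hence `σ_n = -2a ∑_{j<n} R_j` with
`R_j = E p_j² / h_j`.

With `β = h_n / h_{n-1}`, `r = E p_n p_{n-1} / h_{n-1} = β - n/2`, `U = β R_n`, `V = β R_{n-1}`
one has `U V = β r²`, `σ_n = 4r² + 4a²r - 4a(U + V)` (`scalar_sum`) and a closed first-order system
for `r`, `U`, `V` (`scalar_system`). It yields `σ_n' = 8ar - 4(U + V)`, so
`a σ_n' - σ_n - a⁴ = -(2r - a²)²`; `r' = 2(V - U)` is then found from `σ_n''`, and the constraint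
`U V = β r²` becomes the differential equation once the sign of the square root `2r - a²` is
eliminated (`sigma_ode_of_system`).
-/

open MeasureTheory

section Helpers

open Polynomial Filter Topology

/-! ### Orthogonal polynomials of an even positive functional -/

/-- The monic orthogonal polynomials of a functional `L` on `ℝ[X]`, defined by the three-term
recurrence without diagonal term; this is the right recurrence when `L` is even and positive. -/
noncomputable def orthoPoly (L : ℝ[X] →ₗ[ℝ] ℝ) : ℕ → ℝ[X]
  | 0 => 1
  | 1 => X
  | (k + 2) => X * orthoPoly L (k + 1) -
      C (L (orthoPoly L (k + 1) ^ 2) / L (orthoPoly L k ^ 2)) * orthoPoly L k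

theorem orthoPoly_succ_succ (L : ℝ[X] →ₗ[ℝ] ℝ) (k : ℕ) :
    orthoPoly L (k + 2) = X * orthoPoly L (k + 1) -
      C (L (orthoPoly L (k + 1) ^ 2) / L (orthoPoly L k ^ 2)) * orthoPoly L k := by
  rw [orthoPoly]

theorem orthoPoly_monic (L : ℝ[X] →ₗ[ℝ] ℝ) (k : ℕ) :
    ((orthoPoly L k).Monic ∧ (orthoPoly L k).natDegree = k) ∧
    ((orthoPoly L (k + 1)).Monic ∧ (orthoPoly L (k + 1)).natDegree = k + 1) := by
  induction k with
  | zero => simp [orthoPoly, monic_X]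
  | succ k ih =>
    obtain ⟨⟨m0, d0⟩, m1, d1⟩ := ih
    refine ⟨⟨m1, d1⟩, ?_⟩
    rw [show k + 1 + 1 = k + 2 from rfl, orthoPoly_succ_succ]
    have hm : (X * orthoPoly L (k + 1)).Monic := monic_X.mul m1
    have hd : (X * orthoPoly L (k + 1)).natDegree = k + 2 := by
      rw [monic_X.natDegree_mul m1, d1, natDegree_X]; ring
    have hlt : (C (L (orthoPoly L (k + 1) ^ 2) / L (orthoPoly L k ^ 2)) * orthoPoly L k).degree
        < (X * orthoPoly L (k + 1)).degree := by
      rw [degree_eq_natDegree hm.ne_zero, hd]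
      rw [← smul_eq_C_mul]
      refine lt_of_le_of_lt (degree_smul_le _ _) ?_
      rw [degree_eq_natDegree m0.ne_zero, d0]
      exact_mod_cast (by omega)
    exact ⟨hm.sub_of_left hlt, by
      rw [natDegree_eq_of_degree_eq (degree_sub_eq_left_of_degree_lt hlt), hd]⟩

theorem orthoPoly_comp_neg (L : ℝ[X] →ₗ[ℝ] ℝ) (k : ℕ) :
    (orthoPoly L k).comp (-X) = (-1) ^ k * orthoPoly L k ∧
    (orthoPoly L (k + 1)).comp (-X) = (-1) ^ (k + 1) * orthoPoly L (k + 1) := by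
  induction k with
  | zero => simp [orthoPoly]
  | succ k ih =>
    refine ⟨ih.2, ?_⟩
    rw [show k + 1 + 1 = k + 2 from rfl, orthoPoly_succ_succ]
    simp only [sub_comp, mul_comp, X_comp, C_comp, ih.1, ih.2]
    ring

theorem orthoPoly_eval_neg (L : ℝ[X] →ₗ[ℝ] ℝ) (k : ℕ) (x : ℝ) :
    (orthoPoly L k).eval (-x) = (-1) ^ k * (orthoPoly L k).eval x := by
  have := congrArg (eval x) (orthoPoly_comp_neg L k).1
  simpa [eval_comp] using this

/-- `L` is invariant under `x ↦ -x` and positive definite. -/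
structure EvenPos (L : ℝ[X] →ₗ[ℝ] ℝ) : Prop where
  even : ∀ f, L (f.comp (-X)) = L f
  pos : ∀ f, f ≠ 0 → 0 < L (f ^ 2)

namespace EvenPos
variable {L : ℝ[X] →ₗ[ℝ] ℝ}

theorem norm_pos (hL : EvenPos L) (k : ℕ) : 0 < L (orthoPoly L k ^ 2) :=
  hL.pos _ (orthoPoly_monic L k).1.1.ne_zero

theorem odd_eq_zero (hL : EvenPos L) {f : ℝ[X]} (hf : f.comp (-X) = -f) : L f = 0 := by
  have := hL.even f
  rw [hf, map_neg] at this
  linarith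

theorem apply_C_mul (c : ℝ) (f : ℝ[X]) : L (C c * f) = c * L f := by
  rw [← smul_eq_C_mul, map_smul, smul_eq_mul]

theorem coeff_self (L : ℝ[X] →ₗ[ℝ] ℝ) (k : ℕ) : (orthoPoly L k).coeff k = 1 := by
  obtain ⟨hm, hd⟩ := (orthoPoly_monic L k).1
  have := hm.coeff_natDegree
  rwa [hd] at this

theorem apply_mul_of_degree_lt {k : ℕ} {P : ℝ[X]} (hP : ∀ m < k, L (X ^ m * P) = 0)
    {q : ℝ[X]} (hq : q.degree < k) : L (q * P) = 0 := by
  have hq' : q = ∑ i ∈ Finset.range k, C (q.coeff i) * X ^ i := by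
    rcases eq_or_ne q 0 with rfl | h0
    · simp
    · simpa [C_mul_X_pow_eq_monomial] using
        as_sum_range' q k ((natDegree_lt_iff_degree_lt h0).2 hq)
  rw [hq', Finset.sum_mul, map_sum]
  refine Finset.sum_eq_zero fun i hi => ?_
  rw [mul_assoc, apply_C_mul, hP i (Finset.mem_range.1 hi), mul_zero]

theorem degree_sub_X_pow_lt (L : ℝ[X] →ₗ[ℝ] ℝ) (k : ℕ) :
    (X ^ k - orthoPoly L k).degree < (k : WithBot ℕ) := by
  obtain ⟨hm, hd⟩ := (orthoPoly_monic L k).1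
  have := degree_sub_lt_left (p := X ^ k) (q := orthoPoly L k)
    (by rw [degree_X_pow, degree_eq_natDegree hm.ne_zero, hd]) (pow_ne_zero _ X_ne_zero)
    (by rw [hm.leadingCoeff, (monic_X_pow k).leadingCoeff])
  rwa [degree_X_pow] at this

theorem apply_X_pow_self {k : ℕ} (hP : ∀ m < k, L (X ^ m * orthoPoly L k) = 0) :
    L (X ^ k * orthoPoly L k) = L (orthoPoly L k ^ 2) := by
  have := apply_mul_of_degree_lt hP (degree_sub_X_pow_lt L k)
  rw [sub_mul, map_sub, ← sq] at this
  linarith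

theorem orthogonal_X_pow (hL : EvenPos L) (k : ℕ) :
    (∀ m < k, L (X ^ m * orthoPoly L k) = 0) ∧
    (∀ m < k + 1, L (X ^ m * orthoPoly L (k + 1)) = 0) := by
  induction k with
  | zero =>
    refine ⟨fun m hm => absurd hm (by omega), fun m hm => ?_⟩
    obtain rfl : m = 0 := by omega
    exact hL.odd_eq_zero (by simp [orthoPoly])
  | succ k ih =>
    refine ⟨ih.2, fun m hm => ?_⟩
    rw [show k + 1 + 1 = k + 2 from rfl, orthoPoly_succ_succ, mul_sub, map_sub,
      ← mul_assoc, ← pow_succ, mul_left_comm, apply_C_mul]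
    have hh := (hL.norm_pos k).ne'
    rcases Nat.lt_trichotomy m k with h | rfl | h
    · rw [ih.1 m h, ih.2 (m + 1) (by omega)]; simp
    · rw [apply_X_pow_self ih.1, apply_X_pow_self ih.2]
      field_simp; simp
    · obtain rfl : m = k + 1 := by omega
      have hs : ((-1 : ℝ[X]) ^ k) ^ 2 = 1 := by rw [← pow_mul, mul_comm, pow_mul]; simp
      rw [hL.odd_eq_zero (f := X ^ (k + 1) * orthoPoly L k), hL.odd_eq_zero]
      · simp
      · simp only [mul_comp, pow_comp, X_comp, (orthoPoly_comp_neg L k).2]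
        rw [neg_pow (X : ℝ[X])]
        linear_combination -(X ^ (k + 1 + 1) * orthoPoly L (k + 1)) * hs
      · simp only [mul_comp, pow_comp, X_comp, (orthoPoly_comp_neg L k).1]
        rw [neg_pow (X : ℝ[X])]
        linear_combination -(X ^ (k + 1) * orthoPoly L k) * hs

theorem orthogonal (hL : EvenPos L) {k : ℕ} {q : ℝ[X]} (hq : q.degree < k) :
    L (q * orthoPoly L k) = 0 :=
  apply_mul_of_degree_lt (hL.orthogonal_X_pow k).1 hq

theorem degree_orthoPoly (L : ℝ[X] →ₗ[ℝ] ℝ) (k : ℕ) : (orthoPoly L k).degree = k := by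
  obtain ⟨hm, hd⟩ := (orthoPoly_monic L k).1
  rw [degree_eq_natDegree hm.ne_zero, hd]

theorem orthogonal_of_ne (hL : EvenPos L) {i j : ℕ} (hij : i ≠ j) :
    L (orthoPoly L i * orthoPoly L j) = 0 := by
  rcases lt_or_gt_of_ne hij with h | h
  · exact hL.orthogonal (by rw [degree_orthoPoly]; exact_mod_cast h)
  · rw [mul_comm]
    exact hL.orthogonal (by rw [degree_orthoPoly]; exact_mod_cast h)

/-- Pairing with `P_k` extracts the coefficient of `x^k` from a polynomial of degree at most `k`. -/
theorem apply_mul_orthoPoly (hL : EvenPos L) {k : ℕ} {q : ℝ[X]} (hq : q.natDegree ≤ k) :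
    L (q * orthoPoly L k) = q.coeff k * L (orthoPoly L k ^ 2) := by
  have hlt : (q - C (q.coeff k) * orthoPoly L k).degree < k := by
    rw [degree_lt_iff_coeff_zero]
    obtain ⟨hm, hd⟩ := (orthoPoly_monic L k).1
    intro m hkm
    rcases hkm.eq_or_lt with rfl | h
    · simp [coeff_self]
    · simp [coeff_eq_zero_of_natDegree_lt (lt_of_le_of_lt hq h),
        coeff_eq_zero_of_natDegree_lt (lt_of_le_of_lt hd.le h)]
  have := hL.orthogonal hlt
  rw [sub_mul, map_sub, mul_assoc, apply_C_mul, ← sq] at this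
  linarith

/-- If `L` satisfies the integration by parts formula of the weight `e^{-x²}` on `|x| ≥ a`, then
`h_{k+1} = E p_{k+1} p_k + (k+1)/2 h_k`: apply the formula to `P_k P_{k+1}`. -/
theorem norm_succ (hL : EvenPos L) {a E : ℝ}
    (hparts : ∀ f : ℝ[X], 2 * L (X * f) = L (derivative f) + E * (f.eval a - f.eval (-a)))
    (k : ℕ) : L (orthoPoly L (k + 1) ^ 2) =
      E * ((orthoPoly L (k + 1)).eval a * (orthoPoly L k).eval a)
        + ((k : ℝ) + 1) / 2 * L (orthoPoly L k ^ 2) := by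
  obtain ⟨⟨m0, d0⟩, m1, d1⟩ := orthoPoly_monic L k
  have key := hparts (orthoPoly L k * orthoPoly L (k + 1))
  have e1 : L (X * (orthoPoly L k * orthoPoly L (k + 1))) = L (orthoPoly L (k + 1) ^ 2) := by
    rw [← mul_assoc, hL.apply_mul_orthoPoly, coeff_X_mul, coeff_self, one_mul]
    rw [monic_X.natDegree_mul m0, d0, natDegree_X, add_comm]
  have e2 : L (derivative (orthoPoly L k) * orthoPoly L (k + 1)) = 0 :=
    hL.orthogonal (lt_of_le_of_lt (degree_derivative_le)
      (by rw [degree_orthoPoly]; exact_mod_cast Nat.lt_succ_self k))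
  have e3 : L (orthoPoly L k * derivative (orthoPoly L (k + 1))) =
      ((k : ℝ) + 1) * L (orthoPoly L k ^ 2) := by
    rw [mul_comm, hL.apply_mul_orthoPoly, coeff_derivative, coeff_self, one_mul]
    have := natDegree_derivative_le (orthoPoly L (k + 1))
    omega
  rw [e1, derivative_mul, map_add, e2, e3, eval_mul, eval_mul, orthoPoly_eval_neg,
    orthoPoly_eval_neg] at key
  have hs : ((-1 : ℝ) ^ k) ^ 2 = 1 := by rw [← pow_mul, mul_comm, pow_mul]; simp
  rw [pow_succ (-1 : ℝ) k] at key
  linear_combination key / 2 + E * (orthoPoly L k).eval a * (orthoPoly L (k+1)).eval a / 2 * hs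

/-- The Hankel determinant is the product of the norms: the unit lower triangular matrix of
coefficients of the orthogonal polynomials diagonalizes the Hankel form. -/
theorem hankel_det (hL : EvenPos L) (n : ℕ) :
    Matrix.det (Matrix.of fun i j : Fin n => L (X ^ ((i : ℕ) + (j : ℕ)))) =
      ∏ k ∈ Finset.range n, L (orthoPoly L k ^ 2) := by
  set M : Matrix (Fin n) (Fin n) ℝ := Matrix.of fun i j => (orthoPoly L i).coeff j with hM
  set H : Matrix (Fin n) (Fin n) ℝ := Matrix.of fun i j : Fin n => L (X ^ ((i : ℕ) + (j : ℕ)))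
  have hdet : M.det = 1 := by
    rw [Matrix.det_of_isLowerTriangular]
    · exact Finset.prod_eq_one fun i _ => coeff_self L i
    · intro i j hij
      have hij' : (i : ℕ) < j := by simpa using hij
      exact coeff_eq_zero_of_natDegree_lt (by rw [(orthoPoly_monic L i).1.2]; exact hij')
  have hsum : ∀ i : Fin n, orthoPoly L i = ∑ k : Fin n, C (M i k) * X ^ (k : ℕ) := by
    intro i
    change orthoPoly L i = ∑ k : Fin n, C ((orthoPoly L i).coeff k) * X ^ (k : ℕ)
    rw [Fin.sum_univ_eq_sum_range (fun k => C ((orthoPoly L i).coeff k) * X ^ k) n]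
    simpa [C_mul_X_pow_eq_monomial] using
        as_sum_range' (orthoPoly L i) n (by rw [(orthoPoly_monic L i).1.2]; exact i.2)
  have hdiag : M * H * M.transpose =
      Matrix.diagonal fun k : Fin n => L (orthoPoly L k ^ 2) := by
    ext i j
    have : (M * H * M.transpose) i j = L (orthoPoly L i * orthoPoly L j) := by
      rw [hsum i, hsum j, Finset.sum_mul_sum, map_sum, Matrix.mul_apply]
      simp only [Matrix.mul_apply, Matrix.transpose_apply, map_sum, Finset.sum_mul]
      rw [Finset.sum_comm]
      refine Finset.sum_congr rfl fun k _ => Finset.sum_congr rfl fun l _ => ?_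
      rw [mul_mul_mul_comm, ← C_mul, apply_C_mul, ← pow_add]
      simp only [H, Matrix.of_apply]
      ring
    rw [this, Matrix.diagonal_apply]
    split_ifs with h
    · rw [h, sq]
    · exact hL.orthogonal_of_ne (fun h' => h (Fin.ext h'))
  have := congrArg Matrix.det hdiag
  rw [Matrix.det_mul, Matrix.det_mul, Matrix.det_transpose, hdet, one_mul, mul_one,
    Matrix.det_diagonal] at this
  rw [this, Fin.prod_univ_eq_prod_range (fun k => L (orthoPoly L k ^ 2)) n]

end EvenPos

/-! ### The Gaussian weight with a gap -/

theorem integrable_poly_gauss (f : ℝ[X]) :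
    Integrable (fun x : ℝ => f.eval x * Real.exp (-x ^ 2)) := by
  induction f using Polynomial.induction_on' with
  | add p q hp hq => 
    simp only [eval_add, add_mul]
    exact hp.add hq
  | monomial m c =>
    have h := (integrable_rpow_mul_exp_neg_mul_sq (b := 1) one_pos (s := (m : ℝ))
      (by have : (0 : ℝ) ≤ m := m.cast_nonneg
          linarith)).const_mul c
    simpa [mul_assoc, Real.rpow_natCast] using h

theorem tendsto_poly_gauss (f : ℝ[X]) :
    Tendsto (fun x : ℝ => f.eval x * Real.exp (-x ^ 2)) (cocompact ℝ) (𝓝 0) := by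
  induction f using Polynomial.induction_on' with
  | add p q hp hq => simpa only [eval_add, add_mul, add_zero] using hp.add hq
  | monomial m c =>
    rw [tendsto_zero_iff_norm_tendsto_zero]
    have h := (tendsto_rpow_abs_mul_exp_neg_mul_sq_cocompact (a := 1) one_pos (m : ℝ)).const_mul |c|
    simpa [mul_assoc, abs_mul, Real.rpow_natCast] using h

/-- The functional `f ↦ ∫_{|x| ≥ a} f(x) e^{-x²} dx` on polynomials. -/
noncomputable def gapFunctional (a : ℝ) : ℝ[X] →ₗ[ℝ] ℝ where
  toFun f := ∫ x in {x : ℝ | a ≤ |x|}, f.eval x * Real.exp (-x ^ 2)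
  map_add' f g := by
    simp only [eval_add, add_mul]
    exact integral_add (integrable_poly_gauss f).integrableOn (integrable_poly_gauss g).integrableOn
  map_smul' c f := by
    simp only [eval_smul, smul_eq_mul, mul_assoc, RingHom.id_apply]
    exact integral_const_mul c _

theorem gapFunctional_apply (a : ℝ) (f : ℝ[X]) : gapFunctional a f =
    ∫ x in {x : ℝ | a ≤ |x|}, f.eval x * Real.exp (-x ^ 2) := rfl

theorem gapFunctional_eq_add {a : ℝ} (ha : 0 < a) (f : ℝ[X]) : gapFunctional a f =
    (∫ x in Set.Iic (-a), f.eval x * Real.exp (-x ^ 2)) +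
      ∫ x in Set.Ioi a, f.eval x * Real.exp (-x ^ 2) := by
  have hset : {x : ℝ | a ≤ |x|} = Set.Iic (-a) ∪ Set.Ici a := by
    ext x; simp [le_abs, or_comm, le_neg]
  rw [gapFunctional_apply, hset, setIntegral_union _ measurableSet_Ici
    (integrable_poly_gauss f).integrableOn (integrable_poly_gauss f).integrableOn,
    integral_Ici_eq_integral_Ioi]
  rw [Set.disjoint_left]
  intro x hx hx'
  simp only [Set.mem_Iic, Set.mem_Ici] at hx hx'
  linarith

theorem gapFunctional_even {a : ℝ} (ha : 0 < a) (f : ℝ[X]) :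
    gapFunctional a (f.comp (-X)) = gapFunctional a f := by
  rw [gapFunctional_eq_add ha, gapFunctional_eq_add ha, add_comm]
  congr 1
  · rw [← integral_comp_neg_Ioi]; simp [eval_comp]
  · rw [← neg_neg a, ← integral_comp_neg_Iic]; simp [eval_comp]

theorem gapFunctional_pos (a : ℝ) (f : ℝ[X]) (hf : f ≠ 0) : 0 < gapFunctional a (f ^ 2) := by
  rw [gapFunctional_apply, setIntegral_pos_iff_support_of_nonneg_ae]
  · -- The integrand vanishes only at the finitely many roots of `f`.
    have hsub : Set.Ioi |a| \ (f.roots.toFinset : Set ℝ) ⊆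
        (Function.support fun x : ℝ => (f ^ 2).eval x * Real.exp (-x ^ 2)) ∩
          {x : ℝ | a ≤ |x|} := by
      rintro x ⟨hx, hx'⟩
      refine ⟨?_, ?_⟩
      · have : f.eval x ≠ 0 := by simpa [hf] using hx'
        simp [this, (Real.exp_pos _).ne']
      · exact (le_abs_self a).trans ((le_of_lt hx).trans (le_abs_self x))
    refine lt_of_lt_of_le ?_ (measure_mono hsub)
    rw [measure_sdiff_null (Finset.measure_zero _ _)]
    simp
  · exact ae_of_all _ fun x => by
      simp only [eval_pow, Pi.zero_apply]; positivity
  · exact (integrable_poly_gauss _).integrableOn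

/-- Integration by parts; both endpoints `±a` carry the weight `e^{-a²}`. -/
theorem gapFunctional_parts {a : ℝ} (ha : 0 < a) (f : ℝ[X]) :
    2 * gapFunctional a (X * f) = gapFunctional a (derivative f)
      + Real.exp (-a ^ 2) * (f.eval a - f.eval (-a)) := by
  have hd : ∀ x : ℝ, HasDerivAt (fun x : ℝ => f.eval x * Real.exp (-x ^ 2))
      ((derivative f - 2 * (X * f)).eval x * Real.exp (-x ^ 2)) x := by
    intro x
    refine ((f.hasDerivAt x).mul (((hasDerivAt_id x).pow 2).neg.exp)).congr_deriv ?_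
    simp; ring
  have hi := integrable_poly_gauss (derivative f - 2 * (X * f))
  have ht := tendsto_poly_gauss f
  rw [cocompact_eq_atBot_atTop, tendsto_sup] at ht
  have h := gapFunctional_eq_add ha (derivative f - 2 * (X * f))
  rw [integral_Iic_of_hasDerivAt_of_tendsto' (fun x _ => hd x) hi.integrableOn ht.1,
    integral_Ioi_of_hasDerivAt_of_tendsto' (fun x _ => hd x) hi.integrableOn ht.2, map_sub,
    show (2 : ℝ[X]) * (X * f) = (2 : ℝ) • (X * f) by rw [smul_eq_C_mul, map_ofNat], map_smul,
    smul_eq_mul, neg_sq] at h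
  linear_combination -h

theorem hasDerivAt_gapFunctional_one {a : ℝ} (ha : 0 < a) :
    HasDerivAt (fun a => gapFunctional a 1) (-2 * Real.exp (-a ^ 2)) a := by
  have hi : Integrable (fun x : ℝ => Real.exp (-x ^ 2)) := by
    simpa using integrable_poly_gauss 1
  have hc : Continuous (fun x : ℝ => Real.exp (-x ^ 2)) := by fun_prop
  have heq : ∀ b > 0, gapFunctional b 1 =
      2 * ((∫ x in Set.Ioi 0, Real.exp (-x ^ 2)) - ∫ x in (0 : ℝ)..b, Real.exp (-x ^ 2)) := by
    intro b hb
    rw [gapFunctional_eq_add hb, ← integral_comp_neg_Ioi,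
      ← intervalIntegral.integral_interval_add_Ioi (b := b) hi.integrableOn hi.integrableOn]
    simp; ring
  have key := ((hasDerivAt_const a (∫ x in Set.Ioi 0, Real.exp (-x ^ 2))).sub
    (hc.integral_hasStrictDerivAt 0 a).hasDerivAt).const_mul 2
  refine (key.congr_of_eventuallyEq ?_).congr_deriv (by ring)
  filter_upwards [lt_mem_nhds ha] with x hx
  rw [heq x hx]; rfl

/-! ### Dependence on the endpoint -/

/-- Derivatives in `a` of the norms `h k` and of the endpoint values `p k`, by induction from the
recurrences alone. Consecutive indices are treated together; the formula for `p k` is the one for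
`p (k + 1)` with the index lowered, rewritten by the recurrences so as to avoid `p (k - 1)`. -/
theorem scalar_derivs (h p : ℕ → ℝ → ℝ)
    (hpos : ∀ k, ∀ a > 0, 0 < h k a) (p0 : ∀ a > 0, p 0 a = 1) (p1 : ∀ a > 0, p 1 a = a)
    (prec : ∀ k, ∀ a > 0, p (k + 2) a = a * p (k + 1) a - h (k + 1) a / h k a * p k a)
    (hrec : ∀ k : ℕ, ∀ a > 0, h (k + 1) a =
      Real.exp (-a ^ 2) * (p (k + 1) a * p k a) + ((k : ℝ) + 1) / 2 * h k a)
    (h0 : ∀ a > 0, HasDerivAt (h 0) (-2 * Real.exp (-a ^ 2)) a) (k : ℕ) :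
    ∀ a > 0, HasDerivAt (h k) (-2 * Real.exp (-a ^ 2) * p k a ^ 2) a ∧
      HasDerivAt (h (k + 1)) (-2 * Real.exp (-a ^ 2) * p (k + 1) a ^ 2) a ∧
      HasDerivAt (p k) (2 * (a * p k a - p (k + 1) a)
        - 2 * Real.exp (-a ^ 2) * p k a ^ 3 / h k a
        + 2 * Real.exp (-a ^ 2) * p (k + 1) a * p k a ^ 2 / (a * h k a)) a ∧
      HasDerivAt (p (k + 1)) (2 * (h (k + 1) a / h k a) * p k a
        - 2 * Real.exp (-a ^ 2) * p (k + 1) a ^ 2 * p k a / (a * h k a)) a := by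
  have hE : ∀ a : ℝ, HasDerivAt (fun a : ℝ => Real.exp (-a ^ 2))
      (-2 * a * Real.exp (-a ^ 2)) a := fun a =>
    (((hasDerivAt_id a).pow 2).neg.exp).congr_deriv (by simp; ring)
  -- The derivative of `h (k+1)` follows from those of `p k`, `p (k+1)` and `h k`.
  have hstep : ∀ k : ℕ, ∀ a > 0, ∀ p' q' h' : ℝ, HasDerivAt (p (k + 1)) p' a →
      HasDerivAt (p k) q' a → HasDerivAt (h k) h' a → HasDerivAt (h (k + 1))
      (-2 * a * Real.exp (-a ^ 2) * (p (k + 1) a * p k a) + Real.exp (-a ^ 2) *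
        (p' * p k a + p (k + 1) a * q') + ((k : ℝ) + 1) / 2 * h') a := by
    intro k a ha p' q' h' hp hq hh
    refine (((hE a).mul (hp.mul hq)).add (hh.const_mul (((k : ℝ) + 1) / 2))).congr_of_eventuallyEq ?_
    filter_upwards [lt_mem_nhds ha] with x hx
    simp [hrec k x hx]
  induction k with
  | zero =>
    intro a ha
    have ha0 : a ≠ 0 := ha.ne'
    have hh0 := (hpos 0 a ha).ne'
    have d0 : HasDerivAt (p 0) 0 a := (hasDerivAt_const a (1 : ℝ)).congr_of_eventuallyEq
      (by filter_upwards [lt_mem_nhds ha] with x hx using p0 x hx)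
    have d1 : HasDerivAt (p 1) 1 a := (hasDerivAt_id a).congr_of_eventuallyEq
      (by filter_upwards [lt_mem_nhds ha] with x hx using p1 x hx)
    refine ⟨(h0 a ha).congr_deriv ?_, (hstep 0 a ha _ _ _ d1 d0 (h0 a ha)).congr_deriv ?_,
      d0.congr_deriv ?_, d1.congr_deriv ?_⟩
    · simp [p0 a ha]
    · simp [p0 a ha, p1 a ha]; ring
    · simp [p0 a ha, p1 a ha]; field_simp; ring
    · simp only [zero_add, hrec 0 a ha, p0 a ha, p1 a ha]; field_simp; simp
  | succ k ih =>
    intro a ha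
    obtain ⟨dh, dH, dq, dp⟩ := ih a ha
    -- The index `k` is eliminated through `hc`, leaving identities of rational functions.
    have ha0 : a ≠ 0 := ha.ne'
    have hh0 := (hpos k a ha).ne'
    have hH0 := (hpos (k + 1) a ha).ne'
    have hc : ((k : ℝ) + 1) / 2 =
        (h (k + 1) a - Real.exp (-a ^ 2) * (p (k + 1) a * p k a)) / h k a := by
      rw [hrec k a ha]; field_simp; ring
    have hc2 : h (k + 2) a = Real.exp (-a ^ 2) * (p (k + 2) a * p (k + 1) a) +
        (((k : ℝ) + 1) / 2 + 1 / 2) * h (k + 1) a := by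
      rw [hrec (k + 1) a ha]; push_cast; ring
    have dp' : HasDerivAt (p (k + 1)) (2 * (a * p (k + 1) a - p (k + 2) a)
        - 2 * Real.exp (-a ^ 2) * p (k + 1) a ^ 3 / h (k + 1) a
        + 2 * Real.exp (-a ^ 2) * p (k + 2) a * p (k + 1) a ^ 2 / (a * h (k + 1) a)) a := by
      refine dp.congr_deriv ?_
      rw [prec k a ha]; field_simp; ring
    have dp2 : HasDerivAt (p (k + 2)) (2 * (h (k + 2) a / h (k + 1) a) * p (k + 1) a
        - 2 * Real.exp (-a ^ 2) * p (k + 2) a ^ 2 * p (k + 1) a / (a * h (k + 1) a)) a := by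
      have key := ((hasDerivAt_id a).mul dp).sub ((dH.div dh hh0).mul dq)
      refine (key.congr_of_eventuallyEq ?_).congr_deriv ?_
      · filter_upwards [lt_mem_nhds ha] with x hx
        simp [prec k x hx]
      · rw [hc2, hc, prec k a ha]
        simp only [id, Pi.div_apply]
        field_simp
        ring
    refine ⟨dH, (hstep (k + 1) a ha _ _ _ dp2 dp' dH).congr_deriv ?_, dp', dp2⟩
    rw [show ((k + 1 : ℕ) : ℝ) + 1 = 2 * (((k : ℝ) + 1) / 2 + 1 / 2) by push_cast; ring]
    rw [show k + 1 + 1 = k + 2 from rfl, hc2]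
    generalize ((k : ℝ) + 1) / 2 = c
    field_simp
    ring

/-- Closed form of the sum of the `R_j`, i.e. of the Christoffel-Darboux kernel on the diagonal at
the endpoint. -/
theorem scalar_sum (h p : ℕ → ℝ) (a : ℝ) (ha0 : a ≠ 0)
    (hh : ∀ k, h k ≠ 0) (p0 : p 0 = 1) (p1 : p 1 = a)
    (prec : ∀ k, p (k + 2) = a * p (k + 1) - h (k + 1) / h k * p k)
    (hrec : ∀ k : ℕ, h (k + 1) =
      Real.exp (-a ^ 2) * (p (k + 1) * p k) + ((k : ℝ) + 1) / 2 * h k) (k : ℕ) :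
    2 * a * ∑ j ∈ Finset.range (k + 1), Real.exp (-a ^ 2) * p j ^ 2 / h j =
      4 * a * (Real.exp (-a ^ 2) * p (k + 1) ^ 2 / h k
        + h (k + 1) * Real.exp (-a ^ 2) * p k ^ 2 / h k ^ 2)
      - 4 * (Real.exp (-a ^ 2) * p (k + 1) * p k / h k) ^ 2
      - 4 * a ^ 2 * (Real.exp (-a ^ 2) * p (k + 1) * p k / h k) := by
  induction k with
  | zero =>
    have hh0 := hh 0
    simp [p0, p1, hrec 0]; field_simp; ring
  | succ k ih =>
    have hh0 := hh k
    have hH0 := hh (k + 1)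
    have hc : ((k : ℝ) + 1) / 2 =
        (h (k + 1) - Real.exp (-a ^ 2) * (p (k + 1) * p k)) / h k := by
      rw [hrec k]; field_simp; ring
    have hc2 : h (k + 2) = Real.exp (-a ^ 2) * (p (k + 2) * p (k + 1)) +
        (((k : ℝ) + 1) / 2 + 1 / 2) * h (k + 1) := by
      rw [hrec (k + 1)]; push_cast; ring
    rw [Finset.sum_range_succ, mul_add, ih, show k + 1 + 1 = k + 2 from rfl, hc2, hc, prec k]
    field_simp
    ring

/-- With `r = E p_{k+1} p_k / h_k`, `U = E p_{k+1}² / h_k`, `V = E h_{k+1} p_k² / h_k²`, the closed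
differential system with its algebraic constraint, and `σ` as a polynomial in these functions. -/
theorem scalar_system (h p : ℕ → ℝ → ℝ)
    (hpos : ∀ k, ∀ a > 0, 0 < h k a) (p0 : ∀ a > 0, p 0 a = 1) (p1 : ∀ a > 0, p 1 a = a)
    (prec : ∀ k, ∀ a > 0, p (k + 2) a = a * p (k + 1) a - h (k + 1) a / h k a * p k a)
    (hrec : ∀ k : ℕ, ∀ a > 0, h (k + 1) a =
      Real.exp (-a ^ 2) * (p (k + 1) a * p k a) + ((k : ℝ) + 1) / 2 * h k a)
    (h0 : ∀ a > 0, HasDerivAt (h 0) (-2 * Real.exp (-a ^ 2)) a) (k : ℕ) (σ : ℝ → ℝ)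
    (hσ : ∀ a > 0, σ a = -(2 * a * ∑ j ∈ Finset.range (k + 1),
      Real.exp (-a ^ 2) * p j a ^ 2 / h j a)) :
    ∃ r U V : ℝ → ℝ, (∀ a > 0, HasDerivAt r (2 * (V a - U a)) a) ∧
    (∀ a > 0, HasDerivAt U
      (-2 * a * U a + 6 * r a ^ 2 + 2 * ((k : ℝ) + 1) * r a - 4 * r a * U a / a) a) ∧
    (∀ a > 0, HasDerivAt V
      (2 * a * V a - 6 * r a ^ 2 - 2 * ((k : ℝ) + 1) * r a + 4 * r a * V a / a) a) ∧
    (∀ a > 0, U a * V a = (r a + ((k : ℝ) + 1) / 2) * r a ^ 2) ∧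
    (∀ a > 0, σ a = 4 * r a ^ 2 + 4 * a ^ 2 * r a - 4 * a * (U a + V a)) := by
  have hE : ∀ a : ℝ, HasDerivAt (fun a : ℝ => Real.exp (-a ^ 2))
      (-2 * a * Real.exp (-a ^ 2)) a := fun a =>
    (((hasDerivAt_id a).pow 2).neg.exp).congr_deriv (by simp; ring)
  have hc : ∀ a > 0, ((k : ℝ) + 1) =
      2 * ((h (k + 1) a - Real.exp (-a ^ 2) * (p (k + 1) a * p k a)) / h k a) := by
    intro a ha
    have hh0 := (hpos k a ha).ne'
    rw [hrec k a ha]; field_simp; ring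
  refine ⟨fun a => Real.exp (-a ^ 2) * (p (k + 1) a * p k a) / h k a,
    fun a => Real.exp (-a ^ 2) * p (k + 1) a ^ 2 / h k a,
    fun a => Real.exp (-a ^ 2) * (h (k + 1) a * p k a ^ 2) / h k a ^ 2, ?_, ?_, ?_, ?_, ?_⟩
  · intro a ha
    obtain ⟨dh, dH, dq, dp⟩ := scalar_derivs h p hpos p0 p1 prec hrec h0 k a ha
    have ha0 : a ≠ 0 := ha.ne'
    have hh0 := (hpos k a ha).ne'
    refine (((hE a).mul (dp.mul dq)).div dh hh0).congr_deriv ?_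
    simp only [Pi.mul_apply]
    field_simp
    ring
  · intro a ha
    obtain ⟨dh, dH, dq, dp⟩ := scalar_derivs h p hpos p0 p1 prec hrec h0 k a ha
    have ha0 : a ≠ 0 := ha.ne'
    have hh0 := (hpos k a ha).ne'
    refine (((hE a).mul (dp.pow 2)).div dh hh0).congr_deriv ?_
    simp only [Pi.mul_apply, Pi.pow_apply, hc a ha]
    field_simp
    push_cast
    ring
  · intro a ha
    obtain ⟨dh, dH, dq, dp⟩ := scalar_derivs h p hpos p0 p1 prec hrec h0 k a ha
    have ha0 : a ≠ 0 := ha.ne'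
    have hh0 := (hpos k a ha).ne'
    refine (((hE a).mul (dH.mul (dq.pow 2))).div (dh.pow 2) (pow_ne_zero 2 hh0)).congr_deriv ?_
    simp only [Pi.mul_apply, Pi.pow_apply, hc a ha]
    field_simp
    push_cast
    ring
  · intro a ha
    have hh0 := (hpos k a ha).ne'
    simp only [hc a ha]
    field_simp
    ring
  · intro a ha
    rw [hσ a ha, scalar_sum (fun k => h k a) (fun k => p k a) a ha.ne' (fun k => (hpos k a ha).ne')
      (p0 a ha) (p1 a ha) (fun k => prec k a ha) (fun k => hrec k a ha)]
    have hh0 := (hpos k a ha).ne'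
    field_simp
    ring

/-! ### From the differential system to the equation for `σ` -/

/-- The differential system for `r`, `U = βR`, `V = βS` implies the equation for `σ`. The system
gives `a σ' - σ - a⁴ = -w²` with `w = 2r - a²`, and the constraint on `UV`, multiplied by `w²`,
becomes a polynomial relation `e(w) = 0` in `w`, `a`, `σ'`, `σ''`. The claimed equation is
`-16 e(w) e(-w) = 0`, an expression even in `w`. -/
theorem sigma_ode_of_system (n : ℝ) (r U V σ : ℝ → ℝ)
    (hr : ∀ a > 0, HasDerivAt r (2 * (V a - U a)) a)
    (hU : ∀ a > 0, HasDerivAt U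
      (-2 * a * U a + 6 * r a ^ 2 + 2 * n * r a - 4 * r a * U a / a) a)
    (hV : ∀ a > 0, HasDerivAt V
      (2 * a * V a - 6 * r a ^ 2 - 2 * n * r a + 4 * r a * V a / a) a)
    (hUV : ∀ a > 0, U a * V a = (r a + n / 2) * r a ^ 2)
    (hσ : ∀ a > 0, σ a = 4 * r a ^ 2 + 4 * a ^ 2 * r a - 4 * a * (U a + V a)) :
    DifferentiableOn ℝ σ (Set.Ioi 0) ∧ DifferentiableOn ℝ (deriv σ) (Set.Ioi 0) ∧
    ∀ a : ℝ, 0 < a →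
      16 * (a ^ 2 * deriv (deriv σ) a +
            4 * (σ a + 2 * n * a ^ 2) * (a * deriv σ a - σ a - a ^ 4) - 4 * a ^ 4) *
          (a ^ 4 * (deriv (deriv σ) a) ^ 2 -
            4 * a ^ 2 * deriv (deriv σ) a * (a * deriv σ a - σ a) +
            4 * (a * deriv σ a - σ a - a ^ 4) * (a * deriv σ a - 2 * σ a) ^ 2) =
        (a ^ 2 * (deriv (deriv σ) a) ^ 2 +
          4 * ((deriv σ a) ^ 2 + 8 * n * (a * deriv σ a - σ a) - 4 * a ^ 2) *
            (a * deriv σ a - σ a - a ^ 4) - 16 * a ^ 6) ^ 2 := by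
  have h1 : ∀ a > 0, HasDerivAt σ (8 * a * r a - 4 * (U a + V a)) a := by
    intro a ha
    have key := ((((hr a ha).pow 2).const_mul 4).add
      ((((hasDerivAt_id a).pow 2).const_mul 4).mul (hr a ha))).sub
      (((hasDerivAt_id a).const_mul 4).mul ((hU a ha).add (hV a ha)))
    refine (key.congr_of_eventuallyEq ?_).congr_deriv ?_
    · filter_upwards [lt_mem_nhds ha] with x hx
      rw [hσ x hx]; simp
    · have : a ≠ 0 := ha.ne'
      simp; field_simp; ring
  have h2 : ∀ a > 0, HasDerivAt (deriv σ) (8 * r a + 16 * a * (V a - U a)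
      - 8 * a * (V a - U a) - 16 * r a * (V a - U a) / a) a := by
    intro a ha
    have key := (((hasDerivAt_id a).const_mul 8).mul (hr a ha)).sub
      (((hU a ha).add (hV a ha)).const_mul 4)
    refine (key.congr_of_eventuallyEq ?_).congr_deriv ?_
    · filter_upwards [lt_mem_nhds ha] with x hx
      rw [(h1 x hx).deriv]; simp
    · have : a ≠ 0 := ha.ne'
      simp; field_simp; ring
  refine ⟨fun a ha => (h1 a ha).differentiableAt.differentiableWithinAt,
    fun a ha => (h2 a ha).differentiableAt.differentiableWithinAt, fun a ha => ?_⟩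
  have ha0 : a ≠ 0 := ha.ne'
  have e1 := (h1 a ha).deriv
  have e2 := (h2 a ha).deriv
  have e0 := hσ a ha
  have e3 := hUV a ha
  set s := σ a
  set s1 := deriv σ a
  set s2 := deriv (deriv σ) a
  -- `w` is a square root of `a ^ 4 + σ - a * σ'`.
  obtain ⟨w, hw⟩ : ∃ w, w = 2 * r a - a ^ 2 := ⟨_, rfl⟩
  have hs : s = a * s1 - a ^ 4 + w ^ 2 := by rw [e0, e1, hw]; ring
  have hs2 : w * (4 * (V a - U a)) = 2 * a * w + 2 * a ^ 3 - a * s2 / 2 := by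
    rw [e2, hw]; field_simp; ring
  have hs1 : 4 * (U a + V a) = 4 * a * (w + a ^ 2) - s1 := by rw [e1, hw]; ring
  have h : w ^ 2 * (4 * a * w + 4 * a ^ 3 - s1) ^ 2 - (2 * a * w + 2 * a ^ 3 - a * s2 / 2) ^ 2
      - 8 * w ^ 2 * (w + a ^ 2) ^ 2 * (w + a ^ 2 + n) = 0 := by
    rw [← hs2, show 4 * a * w + 4 * a ^ 3 - s1 = 4 * (U a + V a) by rw [hs1]; ring]
    have : w + a ^ 2 = 2 * r a := by rw [hw]; ring
    rw [this]
    linear_combination 64 * w ^ 2 * e3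
  clear_value s s1 s2
  rw [hs]
  linear_combination (-16 * (w ^ 2 * (-4 * a * w + 4 * a ^ 3 - s1) ^ 2
    - (-2 * a * w + 2 * a ^ 3 - a * s2 / 2) ^ 2
    - 8 * w ^ 2 * (-w + a ^ 2) ^ 2 * (-w + a ^ 2 + n))) * h

end Helpers

theorem gue_sigma_ode (n : ℕ) (hn : 1 ≤ n) (σ : ℝ → ℝ)
    (hσ : ∀ a : ℝ, σ a = a * deriv (fun x => Real.log (gaussHankel n x)) a) :
    DifferentiableOn ℝ σ (Set.Ioi 0) ∧ DifferentiableOn ℝ (deriv σ) (Set.Ioi 0) ∧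
    ∀ a : ℝ, 0 < a →
      16 * (a ^ 2 * deriv (deriv σ) a +
            4 * (σ a + 2 * (n : ℝ) * a ^ 2) * (a * deriv σ a - σ a - a ^ 4) - 4 * a ^ 4) *
          (a ^ 4 * (deriv (deriv σ) a) ^ 2 -
            4 * a ^ 2 * deriv (deriv σ) a * (a * deriv σ a - σ a) +
            4 * (a * deriv σ a - σ a - a ^ 4) * (a * deriv σ a - 2 * σ a) ^ 2) =
        (a ^ 2 * (deriv (deriv σ) a) ^ 2 +
          4 * ((deriv σ a) ^ 2 + 8 * (n : ℝ) * (a * deriv σ a - σ a) - 4 * a ^ 2) *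
            (a * deriv σ a - σ a - a ^ 4) - 16 * a ^ 6) ^ 2 := by
  obtain ⟨k, rfl⟩ : ∃ k, n = k + 1 := ⟨n - 1, by omega⟩
  have hL : ∀ a > 0, EvenPos (gapFunctional a) := fun a ha =>
    ⟨gapFunctional_even ha, gapFunctional_pos a⟩
  let P : ℕ → ℝ → Polynomial ℝ := fun j a => orthoPoly (gapFunctional a) j
  let h : ℕ → ℝ → ℝ := fun j a => gapFunctional a (P j a ^ 2)
  let p : ℕ → ℝ → ℝ := fun j a => (P j a).eval a
  have hpos : ∀ j, ∀ a > 0, 0 < h j a := fun j a ha => (hL a ha).norm_pos j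
  have p0 : ∀ a > 0, p 0 a = 1 := fun a _ => by simp [p, P, orthoPoly]
  have p1 : ∀ a > 0, p 1 a = a := fun a _ => by simp [p, P, orthoPoly]
  have prec : ∀ j, ∀ a > 0, p (j + 2) a = a * p (j + 1) a - h (j + 1) a / h j a * p j a :=
    fun j a _ => by simp [p, P, h, orthoPoly_succ_succ]
  have hrec : ∀ j : ℕ, ∀ a > 0, h (j + 1) a =
      Real.exp (-a ^ 2) * (p (j + 1) a * p j a) + ((j : ℝ) + 1) / 2 * h j a :=
    fun j a ha => (hL a ha).norm_succ (gapFunctional_parts ha) j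
  have h0 : ∀ a > 0, HasDerivAt (h 0) (-2 * Real.exp (-a ^ 2)) a := fun a ha => by
    simpa [h, P, orthoPoly] using hasDerivAt_gapFunctional_one ha
  have hD : ∀ a > 0, gaussHankel (k + 1) a = ∏ j ∈ Finset.range (k + 1), h j a := by
    intro a ha
    rw [← (hL a ha).hankel_det (k + 1), gaussHankel]
    simp [gaussMoment, gapFunctional_apply]
  have hσ' : ∀ a > 0, σ a = -(2 * a * ∑ j ∈ Finset.range (k + 1),
      Real.exp (-a ^ 2) * p j a ^ 2 / h j a) := by
    intro a ha
    have key : HasDerivAt (fun x => Real.log (gaussHankel (k + 1) x))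
        (∑ j ∈ Finset.range (k + 1), -2 * Real.exp (-a ^ 2) * p j a ^ 2 / h j a) a := by
      refine (HasDerivAt.fun_sum fun j _ =>
        ((scalar_derivs h p hpos p0 p1 prec hrec h0 j a ha).1.log
          (hpos j a ha).ne')).congr_of_eventuallyEq ?_
      filter_upwards [lt_mem_nhds ha] with x hx
      rw [hD x hx, Real.log_prod fun j _ => (hpos j x hx).ne']
    rw [hσ a, key.deriv, Finset.mul_sum, Finset.mul_sum, ← Finset.sum_neg_distrib]
    exact Finset.sum_congr rfl fun j _ => by ring
  obtain ⟨r, U, V, hr, hU, hV, hUV, hs⟩ :=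
    scalar_system h p hpos p0 p1 prec hrec h0 k σ hσ'
  have := sigma_ode_of_system ((k : ℝ) + 1) r U V σ hr hU hV hUV hs
  simpa only [Nat.cast_add, Nat.cast_one] using this
end

section
/- Let t > 0, α > −1 and n ≥ 1, let P_n(x; t, α) be the monic orthogonal polynomial of degree n for the weight x^α e^{−x} on [t, ∞), and let h_n(t, α) := ∫_t^∞ P_n(y; t, α)² y^α e^{−y} dy. Then α ∫_t^∞ P_n(y; t, α)² y^{α−1} e^{−y} dy = h_n(t, α) − P_n(t; t, α)² t^α e^{−t}. -/
open MeasureTheory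

/-! Write `w(y) = y ^ α * exp (-y)`. The function `P² w` vanishes at infinity and its derivative is
`2 P P' w + α P² y ^ (α - 1) exp (-y) - P² w`. Integrating this over `(t, ∞)` gives
`- P(t)² w(t) = 2 ∫ P P' w + α ∫ P² y ^ (α - 1) exp (-y) - h`, and `∫ P P' w = 0` because `P'` has
degree less than `n` and `P` is orthogonal to every monomial of degree less than `n`. All integrals
converge since `exp (-y)` dominates any power at infinity and `y ^ s` is continuous on `[t, ∞)`. -/

lemma integrableOn_rpow_mul_exp_neg {t : ℝ} (ht : 0 < t) (s : ℝ) :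
    IntegrableOn (fun x : ℝ => x ^ s * Real.exp (-x)) (Set.Ioi t) := by
  refine integrable_of_isBigO_exp_neg (b := 1 / 2) (by norm_num) ?_ ?_
  · refine ContinuousOn.mul (fun x hx => ?_) (by fun_prop)
    exact (Real.continuousAt_rpow_const x s
      (Or.inl (ht.trans_le hx).ne')).continuousWithinAt
  · have h1 := (isLittleO_rpow_exp_pos_mul_atTop s (b := 1 / 2) (by norm_num)).isBigO
    have h2 := h1.mul (Asymptotics.isBigO_refl (fun x : ℝ => Real.exp (-x)) Filter.atTop)
    refine h2.congr_right fun x => ?_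
    rw [← Real.exp_add]
    congr 1
    ring

lemma polynomial_mul_weight_eq_sum (Q : Polynomial ℝ) (s : ℝ) {x : ℝ} (hx : 0 < x) (c : ℝ) :
    c * Q.eval x * x ^ s * Real.exp (-x) =
      ∑ k ∈ Finset.range (Q.natDegree + 1),
        Q.coeff k * (c * x ^ ((k : ℝ) + s) * Real.exp (-x)) := by
  rw [Polynomial.eval_eq_sum_range, Finset.mul_sum, Finset.sum_mul, Finset.sum_mul]
  refine Finset.sum_congr rfl fun k _ => ?_
  rw [Real.rpow_add hx, Real.rpow_natCast]
  ring

lemma integrableOn_polynomial_mul_weight {t : ℝ} (ht : 0 < t) (Q : Polynomial ℝ) (s : ℝ) :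
    IntegrableOn (fun x : ℝ => Q.eval x * x ^ s * Real.exp (-x)) (Set.Ioi t) := by
  have h : IntegrableOn (fun x : ℝ => ∑ k ∈ Finset.range (Q.natDegree + 1),
      Q.coeff k * (1 * x ^ ((k : ℝ) + s) * Real.exp (-x))) (Set.Ioi t) := by
    refine integrable_finsetSum _ fun k _ => Integrable.const_mul ?_ _
    simpa [IntegrableOn] using integrableOn_rpow_mul_exp_neg ht ((k : ℝ) + s)
  refine h.congr_fun (fun x hx => ?_) measurableSet_Ioi
  simpa using (polynomial_mul_weight_eq_sum Q s (ht.trans hx) 1).symm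

/-- Orthogonality to the monomials of degree less than `n` extends linearly to all polynomials of
degree less than `n`. -/
lemma integral_mul_eq_zero_of_natDegree_lt {t α : ℝ} (ht : 0 < t) {n : ℕ} {P : Polynomial ℝ}
    (horth : ∀ k : ℕ, k < n →
      ∫ x in Set.Ioi t, P.eval x * x ^ ((k : ℝ) + α) * Real.exp (-x) = 0)
    {Q : Polynomial ℝ} (hQ : Q.natDegree < n) :
    ∫ x in Set.Ioi t, P.eval x * Q.eval x * x ^ α * Real.exp (-x) = 0 := by
  rw [setIntegral_congr_fun measurableSet_Ioi
    (fun x hx => polynomial_mul_weight_eq_sum Q α (ht.trans hx) (P.eval x)),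
    integral_finsetSum]
  rotate_left
  · exact fun k _ => (integrableOn_polynomial_mul_weight ht P ((k : ℝ) + α)).const_mul _
  refine Finset.sum_eq_zero fun k hk => ?_
  rw [integral_const_mul, horth k (by have := Finset.mem_range.1 hk; omega), mul_zero]

theorem laguerre_norm_identity (t α : ℝ) (ht : 0 < t) (hα : -1 < α)
    (n : ℕ) (hn : 1 ≤ n) (P : Polynomial ℝ) (hmonic : P.Monic) (hdeg : P.natDegree = n)
    (horth : ∀ k : ℕ, k < n →
      ∫ x in Set.Ioi t, P.eval x * x ^ ((k : ℝ) + α) * Real.exp (-x) = 0)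
    (h : ℝ) (hh : h = ∫ y in Set.Ioi t, (P.eval y) ^ 2 * y ^ α * Real.exp (-y)) :
    α * ∫ y in Set.Ioi t, (P.eval y) ^ 2 * y ^ (α - 1) * Real.exp (-y) =
      h - (P.eval t) ^ 2 * t ^ α * Real.exp (-t) := by
  have hzero : ∫ x in Set.Ioi t, P.eval x * P.derivative.eval x * x ^ α * Real.exp (-x) = 0 :=
    integral_mul_eq_zero_of_natDegree_lt ht horth
      (hdeg ▸ Polynomial.natDegree_derivative_lt (by omega))
  have i1 : IntegrableOn
      (fun x : ℝ => P.eval x * P.derivative.eval x * x ^ α * Real.exp (-x)) (Set.Ioi t) := by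
    simpa using integrableOn_polynomial_mul_weight ht (P * P.derivative) α
  have i2 (s : ℝ) : IntegrableOn
      (fun x : ℝ => (P.eval x) ^ 2 * x ^ s * Real.exp (-x)) (Set.Ioi t) := by
    simpa only [Polynomial.eval_mul, pow_two] using
      integrableOn_polynomial_mul_weight ht (P * P) s
  have hderiv : ∀ x ∈ Set.Ici t,
      HasDerivAt (fun x : ℝ => (P.eval x) ^ 2 * x ^ α * Real.exp (-x))
        (2 * (P.eval x * P.derivative.eval x * x ^ α * Real.exp (-x))
          + α * ((P.eval x) ^ 2 * x ^ (α - 1) * Real.exp (-x))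
          - (P.eval x) ^ 2 * x ^ α * Real.exp (-x)) x := by
    intro x hx
    have hx0 : x ≠ 0 := (ht.trans_le hx).ne'
    have hexp : HasDerivAt (fun x : ℝ => Real.exp (-x)) (Real.exp (-x) * -1) x :=
      (hasDerivAt_neg x).exp
    refine ((((P.hasDerivAt x).pow 2).mul
      (Real.hasDerivAt_rpow_const (p := α) (Or.inl hx0))).mul hexp).congr_deriv ?_
    simp only [Pi.mul_apply, Pi.pow_apply]
    push_cast
    ring
  have i12 : IntegrableOn (fun x : ℝ =>
      2 * (P.eval x * P.derivative.eval x * x ^ α * Real.exp (-x))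
        + α * ((P.eval x) ^ 2 * x ^ (α - 1) * Real.exp (-x))) (Set.Ioi t) :=
    (i1.const_mul 2).add ((i2 (α - 1)).const_mul α)
  have ideriv := i12.sub (i2 α)
  -- An integrable function with integrable derivative tends to zero at infinity.
  have hlim := tendsto_zero_of_hasDerivAt_of_integrableOn_Ioi
    (fun x hx => hderiv x (Set.mem_Ici_of_Ioi hx)) ideriv (i2 α)
  have key := integral_Ioi_of_hasDerivAt_of_tendsto' hderiv ideriv hlim
  rw [integral_sub i12 (i2 α), integral_add (i1.const_mul 2) ((i2 (α - 1)).const_mul α),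
    integral_const_mul, integral_const_mul, hzero, ← hh] at key
  linarith
end

section
/- Let t > 0, α > 0 and n ≥ 0, let P_n(x; t, α) be the monic orthogonal polynomial of degree n for the weight x^α e^{−x} on [t, ∞), let h_n(t, α) := ∫_t^∞ P_n(y; t, α)² y^α e^{−y} dy, and define R_n(t) := P_n(t; t, α)² t^α e^{−t} / h_n(t, α). Then 0 ≤ R_n(t) < 1. -/
/-!
Write `w x = x ^ α * exp (-x)`. Since `(P² w)' = 2 P P' w + α P² w / x - P² w` and `P² w` vanishes
at infinity, integrating over `(t, ∞)` gives
`-P(t)² w(t) = 2 ∫ P P' w + α ∫ P² w / x - h`.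
The first integral vanishes by orthogonality, as `deg P' < deg P`. Hence
`P(t)² w(t) = h - α ∫ P² w / x < h`, both integrals being positive, and dividing by `h` yields the
bounds.
-/

open MeasureTheory

open Filter Asymptotics in
lemma isBigO_poly_rpow_exp (Q : Polynomial ℝ) (s : ℝ) :
    (fun x : ℝ => Q.eval x * x ^ s * Real.exp (-x)) =O[atTop]
      fun x => Real.exp (-(1 / 2) * x) := by
  induction Q using Polynomial.induction_on' with
  | add p q hp hq =>
    refine (hp.add hq).congr_left fun x => ?_
    simp only [Polynomial.eval_add]
    ring
  | monomial k a =>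
    have h := (Real.Gamma_integrand_isLittleO ((k : ℝ) + s)).isBigO.const_mul_left a
    refine h.congr' ?_ EventuallyEq.rfl
    filter_upwards [eventually_gt_atTop 0] with x hx
    rw [Polynomial.eval_monomial, Real.rpow_add hx,
      Real.rpow_natCast]
    ring

lemma tendsto_poly_rpow_exp (Q : Polynomial ℝ) (s : ℝ) :
    Filter.Tendsto (fun x : ℝ => Q.eval x * x ^ s * Real.exp (-x)) Filter.atTop (nhds 0) := by
  refine (isBigO_poly_rpow_exp Q s).trans_tendsto ?_
  refine Real.tendsto_exp_atBot.comp ?_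
  exact Filter.tendsto_id.const_mul_atTop_of_neg (by norm_num)

lemma continuousOn_poly_rpow_exp (Q : Polynomial ℝ) (s : ℝ) {t : ℝ} (ht : 0 < t) :
    ContinuousOn (fun x : ℝ => Q.eval x * x ^ s * Real.exp (-x)) (Set.Ici t) := by
  refine (Q.continuous.continuousOn.mul ?_).mul (by fun_prop)
  exact continuousOn_id.rpow_const fun x hx => Or.inl (ht.trans_le hx).ne'

lemma integrableOn_poly_rpow_exp (Q : Polynomial ℝ) (s : ℝ) {t : ℝ} (ht : 0 < t) :
    IntegrableOn (fun x : ℝ => Q.eval x * x ^ s * Real.exp (-x)) (Set.Ioi t) :=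
  integrable_of_isBigO_exp_neg (by norm_num : (0 : ℝ) < 1 / 2)
    (continuousOn_poly_rpow_exp Q s ht) (isBigO_poly_rpow_exp Q s)

lemma integral_sq_pos {P : Polynomial ℝ} (hP : P ≠ 0) (s : ℝ) {t : ℝ} (ht : 0 < t) :
    0 < ∫ x in Set.Ioi t, (P ^ 2).eval x * x ^ s * Real.exp (-x) := by
  rw [setIntegral_pos_iff_support_of_nonneg_ae _ (integrableOn_poly_rpow_exp _ s ht)]
  · have hsub : Set.Ioi t \ {x | P.IsRoot x} ⊆
        (Function.support fun x : ℝ => (P ^ 2).eval x * x ^ s * Real.exp (-x)) ∩ Set.Ioi t := by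
      rintro x ⟨hx, hr⟩
      have hx0 : 0 < x := ht.trans hx
      refine ⟨?_, hx⟩
      rw [Function.mem_support, Polynomial.eval_pow]
      exact mul_ne_zero (mul_ne_zero (pow_ne_zero 2 hr) (Real.rpow_pos_of_pos hx0 s).ne')
        (Real.exp_pos _).ne'
    refine lt_of_lt_of_le ?_ (measure_mono hsub)
    rw [measure_sdiff_null ((Polynomial.finite_setOfPred_isRoot hP).measure_zero _)]
    simp
  · filter_upwards [ae_restrict_mem measurableSet_Ioi] with x hx
    have hx0 : 0 < x := ht.trans hx
    simp only [Polynomial.eval_pow, Pi.zero_apply]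
    positivity

/-- Orthogonality to the powers `x ^ k`, `k < n`, extends to all polynomials of degree below `n`. -/
lemma integral_mul_eq_zero {t α : ℝ} (ht : 0 < t) {n : ℕ} {P : Polynomial ℝ}
    (horth : ∀ k : ℕ, k < n →
      ∫ x in Set.Ioi t, P.eval x * x ^ ((k : ℝ) + α) * Real.exp (-x) = 0)
    (Q : Polynomial ℝ) (hQ : Q.natDegree < n) :
    ∫ x in Set.Ioi t, (P * Q).eval x * x ^ α * Real.exp (-x) = 0 := by
  have h : ∀ x ∈ Set.Ioi t, (P * Q).eval x * x ^ α * Real.exp (-x) =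
      ∑ k ∈ Finset.range n, Q.coeff k * (P.eval x * x ^ ((k : ℝ) + α) * Real.exp (-x)) := by
    intro x hx
    rw [Polynomial.eval_mul, Polynomial.eval_eq_sum_range' hQ, Finset.mul_sum, Finset.sum_mul,
      Finset.sum_mul]
    refine Finset.sum_congr rfl fun k _ => ?_
    rw [Real.rpow_add (ht.trans hx), Real.rpow_natCast]
    ring
  rw [setIntegral_congr_fun measurableSet_Ioi h, integral_finsetSum]
  · refine Finset.sum_eq_zero fun k hk => ?_
    rw [integral_const_mul, horth k (Finset.mem_range.1 hk), mul_zero]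
  · exact fun k _ => (integrableOn_poly_rpow_exp P _ ht).const_mul _

/-- Integration by parts for `P² x ^ α exp (-x)` on `(t, ∞)`. -/
lemma boundary_identity (P : Polynomial ℝ) {t : ℝ} (ht : 0 < t) (α : ℝ) :
    2 * (∫ x in Set.Ioi t, (P * P.derivative).eval x * x ^ α * Real.exp (-x))
      + α * (∫ x in Set.Ioi t, (P ^ 2).eval x * x ^ (α - 1) * Real.exp (-x))
      - (∫ x in Set.Ioi t, (P ^ 2).eval x * x ^ α * Real.exp (-x))
      = - ((P ^ 2).eval t * t ^ α * Real.exp (-t)) := by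
  have i1 := (integrableOn_poly_rpow_exp (P * P.derivative) α ht).const_mul 2
  have i2 := (integrableOn_poly_rpow_exp (P ^ 2) (α - 1) ht).const_mul α
  have i3 := integrableOn_poly_rpow_exp (P ^ 2) α ht
  have key := integral_Ioi_of_hasDerivAt_of_tendsto
    (f := fun x : ℝ => (P ^ 2).eval x * x ^ α * Real.exp (-x))
    (continuousOn_poly_rpow_exp (P ^ 2) α ht t Set.self_mem_Ici) (fun x hx => ?_)
    ((i1.add i2).sub i3) (tendsto_poly_rpow_exp (P ^ 2) α)
  · rw [zero_sub] at key
    rw [← key, ← integral_const_mul, ← integral_const_mul, ← integral_add i1 i2]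
    exact (integral_sub (i1.add i2) i3).symm
  · have hx0 : x ≠ 0 := (ht.trans hx).ne'
    have hd := (((P ^ 2).hasDerivAt x).mul (Real.hasDerivAt_rpow_const (p := α) (Or.inl hx0))).mul
      (hasDerivAt_neg x).exp
    refine hd.congr_deriv ?_
    simp only [Polynomial.derivative_pow, Polynomial.eval_mul, Polynomial.eval_pow, Pi.add_apply,
      Pi.sub_apply, Pi.mul_apply]
    simp
    ring

theorem laguerre_Rn_bounds (t α : ℝ) (ht : 0 < t) (hα : 0 < α)
    (n : ℕ) (P : Polynomial ℝ) (hmonic : P.Monic) (hdeg : P.natDegree = n)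
    (horth : ∀ k : ℕ, k < n →
      ∫ x in Set.Ioi t, P.eval x * x ^ ((k : ℝ) + α) * Real.exp (-x) = 0)
    (R : ℝ)
    (hR : R = (P.eval t) ^ 2 * t ^ α * Real.exp (-t) /
      ∫ y in Set.Ioi t, (P.eval y) ^ 2 * y ^ α * Real.exp (-y)) :
    0 ≤ R ∧ R < 1 := by
  have hpos := integral_sq_pos hmonic.ne_zero α ht
  have hpos' := integral_sq_pos hmonic.ne_zero (α - 1) ht
  have hparts := boundary_identity P ht α
  have hzero : ∫ x in Set.Ioi t, (P * P.derivative).eval x * x ^ α * Real.exp (-x) = 0 := by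
    rcases Nat.eq_zero_or_pos n with hn | hn
    · have hP1 : P = 1 := hmonic.natDegree_eq_zero.1 (hdeg.trans hn)
      simp [hP1]
    · refine integral_mul_eq_zero ht horth _ ?_
      rw [← hdeg]
      exact Polynomial.natDegree_derivative_lt (by omega)
  rw [hzero] at hparts
  simp only [Polynomial.eval_pow] at hpos hpos' hparts
  have hα' := mul_pos hα hpos'
  subst hR
  refine ⟨by positivity, ?_⟩
  rw [div_lt_one hpos]
  linarith
end

section
/- Fix α > 0 and t > 0. Then there exist N ∈ ℕ and C > 0 such that for every integer n ≥ N the quartic relation b ( b − 2(2n+α) − t )² = 4 α² t has a unique solution b_n in the open interval (4n, 4n + 2α + t), and this solution satisfies | b_n − ( 4n + 2α + t − α √t · n^{−1/2} ) | ≤ C n^{−3/2}. -/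
/-!
Put `L = 2α + t`, `M = 4n + L` and `d = M - b`, so that the equation reads `(M - d) d² = 4α²t` with
`0 < d < L`. Existence is the intermediate value theorem: `b (M - b)²` vanishes at `b = M` and is
at least `16 n α² > 4α²t` at `b = 4n`. Two distinct solutions `d₁`, `d₂` would satisfy
`M (d₁ + d₂) = d₁² + d₁d₂ + d₂² < (d₁ + d₂)²`, hence `M < d₁ + d₂ < 2L`, which fails for large `n`.

For the asymptotics, taking square roots gives `d = 2α√t / √b`, while the proposed main term is
`α√t / √n = 2α√t / √(4n)`. Since `0 < b - 4n < L`, these differ by at most `α√t L / (8 n^{3/2})`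
(`endpoint_estimate`).
-/

/-- The quantitative estimate in square-root variables: `s = √n`, `r = √t`, `β = √b`, and
`d = 4n + L - b` is the distance from `b` to the right end of the interval. -/
lemma endpoint_estimate {α r s β L d : ℝ} (hα : 0 < α) (hr : 0 < r) (hs : 0 < s)
    (hd : 0 < d) (hβ : 2 * s < β) (hβL : β ^ 2 = 4 * s ^ 2 + L - d) (h : β * d = 2 * α * r) :
    |α * r * s⁻¹ - d| ≤ α * r * L * (s ^ 3)⁻¹ := by
  have e : α * r * s⁻¹ - d = d * (β - 2 * s) / (2 * s) := by
    field_simp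
    linarith
  have h0 : 0 < β - 2 * s := by linarith
  have hL : 0 < L := by nlinarith
  have h1 : (β - 2 * s) * s ≤ L := by nlinarith
  have h2 : d * s ≤ α * r := by nlinarith
  rw [e, abs_of_nonneg (by positivity), ← div_eq_mul_inv, div_le_div_iff₀ (by positivity)
    (by positivity)]
  have h3 : (d * s) * ((β - 2 * s) * s) ≤ (α * r) * L :=
    mul_le_mul h2 h1 (by positivity) (by positivity)
  have h4 := mul_le_mul_of_nonneg_right h3 hs.le
  have h5 : 0 < α * r * L * s := by positivity
  nlinarith

lemma endpoint_unique {n L c x y : ℝ} (hn : L ≤ 4 * n)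
    (hx : x ∈ Set.Ioo (4 * n) (4 * n + L)) (hy : y ∈ Set.Ioo (4 * n) (4 * n + L))
    (ex : x * (4 * n + L - x) ^ 2 = c) (ey : y * (4 * n + L - y) ^ 2 = c) : x = y := by
  obtain ⟨hx1, hx2⟩ := hx
  obtain ⟨hy1, hy2⟩ := hy
  by_contra hne
  obtain ⟨p, hp⟩ : ∃ p, p = 4 * n + L - x := ⟨_, rfl⟩
  obtain ⟨q, hq⟩ : ∃ q, q = 4 * n + L - y := ⟨_, rfl⟩
  have hp0 : 0 < p := by linarith
  have hq0 : 0 < q := by linarith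
  have hpq : p - q ≠ 0 := fun h => hne (by linarith)
  have key : (4 * n + L) * (p + q) = p ^ 2 + p * q + q ^ 2 := by
    apply mul_left_cancel₀ hpq
    rw [← hp] at ex
    rw [← hq] at ey
    have hx' : x = 4 * n + L - p := by linarith
    have hy' : y = 4 * n + L - q := by linarith
    subst hx' hy'
    linear_combination ex - ey
  have : (p + q) * (p + q) < (4 * n + L) * (p + q) :=
    mul_lt_mul_of_pos_right (by linarith) (by linarith)
  nlinarith [mul_pos hp0 hq0]

theorem coulomb_fluid_endpoint_asymptotics (α t : ℝ) (hα : 0 < α) (ht : 0 < t) :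
    ∃ (N : ℕ) (C : ℝ), 0 < C ∧ ∀ n : ℕ, N ≤ n →
      (∃! b : ℝ, b ∈ Set.Ioo (4 * (n : ℝ)) (4 * (n : ℝ) + 2 * α + t) ∧
        b * (b - 2 * (2 * (n : ℝ) + α) - t) ^ 2 = 4 * α ^ 2 * t) ∧
      ∀ b : ℝ,
        (b ∈ Set.Ioo (4 * (n : ℝ)) (4 * (n : ℝ) + 2 * α + t) ∧
          b * (b - 2 * (2 * (n : ℝ) + α) - t) ^ 2 = 4 * α ^ 2 * t) →
        |b - (4 * (n : ℝ) + 2 * α + t - α * Real.sqrt t * (n : ℝ) ^ (-(1 / 2) : ℝ))| ≤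
          C * (n : ℝ) ^ (-(3 / 2) : ℝ) := by
  obtain ⟨N, hN⟩ := exists_nat_ge (2 * α + t)
  have hr : 0 < Real.sqrt t := Real.sqrt_pos.2 ht
  refine ⟨N, α * Real.sqrt t * (2 * α + t), by positivity, fun n hn => ?_⟩
  have hnL : 2 * α + t ≤ (n : ℝ) := hN.trans (by exact_mod_cast hn)
  generalize (n : ℝ) = n at hnL ⊢
  have hn0 : 0 < n := by linarith
  refine ⟨?_, ?_⟩
  · have hcont : ContinuousOn (fun b : ℝ => b * (b - 2 * (2 * n + α) - t) ^ 2)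
        (Set.Icc (4 * n) (4 * n + 2 * α + t)) := by fun_prop
    have hmem : 4 * α ^ 2 * t ∈ Set.Ioo
        ((4 * n + 2 * α + t) * ((4 * n + 2 * α + t) - 2 * (2 * n + α) - t) ^ 2)
        (4 * n * (4 * n - 2 * (2 * n + α) - t) ^ 2) := by
      constructor
      · have : (4 * n + 2 * α + t) - 2 * (2 * n + α) - t = 0 := by ring
        rw [this]
        simp only [ne_eq, OfNat.ofNat_ne_zero, not_false_eq_true, zero_pow, mul_zero]
        positivity
      · have e : 4 * n - 2 * (2 * n + α) - t = -(2 * α + t) := by ring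
        rw [e, neg_sq]
        have h1 : α ^ 2 ≤ (2 * α + t) ^ 2 := pow_le_pow_left₀ hα.le (by linarith) 2
        have h2 : α ^ 2 * t < (2 * α + t) ^ 2 * n :=
          mul_lt_mul' h1 (by linarith) ht.le (by positivity)
        linarith
    obtain ⟨b, hb, hbe⟩ := intermediate_value_Ioo' (by linarith) hcont hmem
    refine ⟨b, ⟨hb, hbe⟩, ?_⟩
    rintro y ⟨hy, hye⟩
    rw [add_assoc] at hb hy
    exact endpoint_unique (c := 4 * α ^ 2 * t) (by linarith) hy hb (by rw [← hye]; ring)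
      (by rw [← hbe]; ring)
  · rintro b ⟨⟨hb1, hb2⟩, hbe⟩
    have hb0 : 0 < b := by linarith
    have hs : 0 < Real.sqrt n := Real.sqrt_pos.2 hn0
    have e1 : n ^ (-(1 / 2) : ℝ) = (Real.sqrt n)⁻¹ := by
      rw [Real.rpow_neg hn0.le, Real.sqrt_eq_rpow]
    have e3 : n ^ (-(3 / 2) : ℝ) = (Real.sqrt n ^ 3)⁻¹ := by
      rw [Real.rpow_neg hn0.le, Real.sqrt_eq_rpow, ← Real.rpow_natCast, ← Real.rpow_mul hn0.le]
      norm_num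
    rw [e1, e3]
    have sn := Real.sq_sqrt hn0.le
    have sb := Real.sq_sqrt hb0.le
    have st := Real.sq_sqrt ht.le
    have hd : 0 < 4 * n + 2 * α + t - b := by linarith
    have hβ : 2 * Real.sqrt n < Real.sqrt b :=
      Real.lt_sqrt_of_sq_lt (by rw [mul_pow, sn]; linarith)
    have hprod : Real.sqrt b * (4 * n + 2 * α + t - b) = 2 * α * Real.sqrt t := by
      rw [← sq_eq_sq₀ (by positivity) (by positivity), mul_pow, mul_pow, sb, st]
      linear_combination hbe
    have := endpoint_estimate (L := 2 * α + t) hα hr hs hd hβ (by rw [sb, sn]; ring) hprod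
    convert this using 2
    ring
end
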